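/- arXiv:1410.5466 — 8 statements merged into one kernel-verified Lean document; each statement's English description precedes it below -/
import Mathlib

section
/- For every subset S ⊆ ℝ there exists a strictly increasing function g : S → ℝ such that every gap of the image g(S) is either a singleton or an open interval. (This is Debreu's Gap Lemma, the classical case of the paper's conditional Gap Lemma.) -/
/-- A gap of `T ⊆ ℝ`: a nonempty order-convex subset of `ℝ \ T`, maximal with
respect to inclusion among order-convex subsets of `ℝ \ T`, bounded between two
elements of `T`. -/
def IsGap (T G : Set ℝ) : Prop :=
  G.Nonempty ∧ G ⊆ Tᶜ ∧ G.OrdConnected ∧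
    (∀ G' : Set ℝ, G'.OrdConnected → G' ⊆ Tᶜ → G ⊆ G' → G' = G) ∧
    ∃ a ∈ T, ∃ b ∈ T, ∀ x ∈ G, a ≤ x ∧ x ≤ b

section Bisection

variable {X : Type*} [LinearOrder X]

/-- Bisection along a sequence `d`: after `n` steps every point carries an interval of admissible
values. Step `n` assigns to `d n` the midpoint of its interval, and shrinks the intervals of all
other points accordingly. -/
noncomputable def bisect (d : ℕ → X) : ℕ → X → ℝ × ℝ
  | 0, _ => (-1, 1)
  | n + 1, x =>
    let m := ((bisect d n (d n)).1 + (bisect d n (d n)).2) / 2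
    if x < d n then ((bisect d n x).1, min (bisect d n x).2 m)
    else if d n < x then (max (bisect d n x).1 m, (bisect d n x).2)
    else (m, m)

/-- The value assigned to `d n` by the bisection along `d`. -/
noncomputable def bisectValue (d : ℕ → X) (n : ℕ) : ℝ :=
  ((bisect d n (d n)).1 + (bisect d n (d n)).2) / 2

variable (d : ℕ → X) (n : ℕ) {x : X}

lemma bisect_succ_of_lt (h : x < d n) :
    bisect d (n + 1) x = ((bisect d n x).1, min (bisect d n x).2 (bisectValue d n)) := by
  simp [bisect, bisectValue, h]

lemma bisect_succ_of_gt (h : d n < x) :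
    bisect d (n + 1) x = (max (bisect d n x).1 (bisectValue d n), (bisect d n x).2) := by
  simp [bisect, bisectValue, h, h.not_gt]

lemma bisect_succ_self :
    bisect d (n + 1) (d n) = (bisectValue d n, bisectValue d n) := by
  simp [bisect, bisectValue]

lemma bisect_invariant :
    (∀ x, (bisect d n x).1 ≤ (bisect d n x).2) ∧
    ∀ x y, x < y → (bisect d n x).1 < (bisect d n y).2 ∧
      (bisect d n x = bisect d n y ∨ (bisect d n x).2 ≤ (bisect d n y).1) := by
  induction n with
  | zero => simp [bisect]
  | succ n ih =>
    obtain ⟨hle, hlt⟩ := ih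
    have hm : bisectValue d n = ((bisect d n (d n)).1 + (bisect d n (d n)).2) / 2 := rfl
    have hp := hle (d n)
    constructor
    · intro x
      rcases lt_trichotomy x (d n) with h | rfl | h
      · rw [bisect_succ_of_lt d n h]
        have := hlt x (d n) h
        have := hle x
        grind
      · simp [bisect_succ_self]
      · rw [bisect_succ_of_gt d n h]
        have := hlt (d n) x h
        have := hle x
        grind
    · intro x y hxy
      have hx := hle x
      have hy := hle y
      have h0 := hlt x y hxy
      rcases lt_trichotomy x (d n) with h | rfl | h
      · rw [bisect_succ_of_lt d n h]
        have h1 := hlt x (d n) h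
        rcases lt_trichotomy y (d n) with h' | rfl | h'
        · rw [bisect_succ_of_lt d n h']
          have h2 := hlt y (d n) h'
          grind
        · rw [bisect_succ_self]
          grind
        · rw [bisect_succ_of_gt d n h']
          grind
      · rw [bisect_succ_self, bisect_succ_of_gt d n hxy]
        grind
      · rw [bisect_succ_of_gt d n h, bisect_succ_of_gt d n (h.trans hxy)]
        have h1 := hlt (d n) x h
        have h2 := hlt (d n) y (h.trans hxy)
        grind

lemma bisect_fst_le_snd (x : X) : (bisect d n x).1 ≤ (bisect d n x).2 :=
  (bisect_invariant d n).1 x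

lemma bisect_fst_mono : Monotone fun x => (bisect d n x).1 := by
  refine monotone_iff_forall_lt.2 fun x y h => ?_
  have := ((bisect_invariant d n).2 x y h).2
  have := bisect_fst_le_snd d n x
  grind

lemma bisect_snd_mono : Monotone fun x => (bisect d n x).2 := by
  refine monotone_iff_forall_lt.2 fun x y h => ?_
  have := ((bisect_invariant d n).2 x y h).2
  have := bisect_fst_le_snd d n y
  grind

lemma bisect_fst_le_succ (x : X) : (bisect d n x).1 ≤ (bisect d (n + 1) x).1 := by
  rcases lt_trichotomy x (d n) with h | rfl | h
  · simp [bisect_succ_of_lt d n h]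
  · have := bisect_fst_le_snd d n (d n)
    rw [bisect_succ_self, bisectValue]
    grind
  · simp [bisect_succ_of_gt d n h]

lemma bisect_fst_monotone_step (x : X) : Monotone fun n => (bisect d n x).1 :=
  monotone_nat_of_le_succ fun n => bisect_fst_le_succ d n x

lemma bisect_apply_of_lt {i n : ℕ} (h : i < n) :
    bisect d n (d i) = (bisectValue d i, bisectValue d i) := by
  induction n, h using Nat.le_induction with
  | base => exact bisect_succ_self d i
  | succ n _ ih =>
    have hm : bisectValue d n = ((bisect d n (d n)).1 + (bisect d n (d n)).2) / 2 := rfl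
    have hp := bisect_fst_le_snd d n (d n)
    rcases lt_trichotomy (d i) (d n) with h' | h' | h'
    · rw [bisect_succ_of_lt d n h']
      have := ((bisect_invariant d n).2 _ _ h').2
      grind
    · rw [h'] at ih ⊢
      rw [bisect_succ_self, hm, ih]
      simp
    · rw [bisect_succ_of_gt d n h']
      have := ((bisect_invariant d n).2 _ _ h').2
      grind

lemma le_bisect_snd {b : ℝ} (hb : b ≤ 1) (h : ∀ j < n, x ≤ d j → b ≤ bisectValue d j) :
    b ≤ (bisect d n x).2 := by
  induction n with
  | zero => simpa [bisect]
  | succ n ih =>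
    have ih := ih fun j hj => h j (hj.trans n.lt_succ_self)
    have hn := h n n.lt_succ_self
    rcases lt_trichotomy x (d n) with h' | rfl | h'
    · simpa [bisect_succ_of_lt d n h', ih] using hn h'.le
    · simpa [bisect_succ_self] using hn
    · simpa [bisect_succ_of_gt d n h'] using ih

lemma bisect_fst_le {a : ℝ} (ha : -1 ≤ a) (h : ∀ j < n, d j ≤ x → bisectValue d j ≤ a) :
    (bisect d n x).1 ≤ a := by
  induction n with
  | zero => simpa [bisect]
  | succ n ih =>
    have ih := ih fun j hj => h j (hj.trans n.lt_succ_self)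
    have hn := h n n.lt_succ_self
    rcases lt_trichotomy x (d n) with h' | rfl | h'
    · simpa [bisect_succ_of_lt d n h'] using ih
    · simpa [bisect_succ_self] using hn
    · simpa [bisect_succ_of_gt d n h', ih] using hn h'.le

lemma bisectValue_lt {i j : ℕ} (h : d i < d j) : bisectValue d i < bisectValue d j := by
  have := ((bisect_invariant d (max i j + 1)).2 _ _ h).1
  rwa [bisect_apply_of_lt d (by omega), bisect_apply_of_lt d (by omega)] at this

lemma bisect_snd_le_one (x : X) : (bisect d n x).2 ≤ 1 := by
  induction n generalizing x with
  | zero => simp [bisect]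
  | succ n ih =>
    rcases lt_trichotomy x (d n) with h | rfl | h
    · simp [bisect_succ_of_lt d n h, ih x]
    · have := bisect_fst_le_snd d n (d n)
      have := ih (d n)
      rw [bisect_succ_self, bisectValue]
      grind
    · simp [bisect_succ_of_gt d n h, ih x]

lemma neg_one_le_bisect_fst (x : X) : -1 ≤ (bisect d n x).1 := by
  simpa [bisect] using bisect_fst_monotone_step d x n.zero_le

/-- If `d k` lies above an earlier point `d i`, and the values of the earlier points above `d k` are
at least `b`, then the value at `d k` is at least the midpoint of `b` and the value at `d i`. -/
def LeftBisecting (d : ℕ → X) (v : ℕ → ℝ) : Prop :=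
  ∀ i k, i < k → d i < d k → ∀ b ≤ (1 : ℝ), (∀ j < k, d k ≤ d j → b ≤ v j) → (v i + b) / 2 ≤ v k

lemma leftBisecting_bisectValue : LeftBisecting d (bisectValue d) := by
  intro i k hik h b hb hj
  have h1 := le_bisect_snd d k hb hj
  have h2 := bisect_fst_mono d k h.le
  simp only [bisect_apply_of_lt d hik] at h2
  rw [bisectValue.eq_def d k]
  linarith

lemma leftBisecting_dual_neg_bisectValue :
    LeftBisecting (X := Xᵒᵈ) (fun n => OrderDual.toDual (d n)) (fun n => -bisectValue d n) := by
  intro i k hik h b hb hj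
  have h : d k < d i := h
  have h1 : (bisect d k (d k)).1 ≤ -b :=
    bisect_fst_le d k (by linarith) fun j hjk hle => by
      have := hj j hjk hle
      linarith
  have h2 := bisect_snd_mono d k h.le
  simp only [bisect_apply_of_lt d hik] at h2
  simp only [bisectValue.eq_def d k]
  linarith

/-- The monotone extension of the bisection values to the whole order. -/
noncomputable def bisectLimit (d : ℕ → X) (x : X) : ℝ := ⨆ n, (bisect d n x).1

lemma bddAbove_range_bisect_fst (x : X) : BddAbove (Set.range fun n => (bisect d n x).1) :=
  ⟨1, by
    rintro _ ⟨n, rfl⟩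
    exact (bisect_fst_le_snd d n x).trans (bisect_snd_le_one d n x)⟩

lemma bisectLimit_mono : Monotone (bisectLimit d) := fun _ y h =>
  ciSup_mono (bddAbove_range_bisect_fst d y) fun n => bisect_fst_mono d n h

lemma bisectLimit_le_one (x : X) : bisectLimit d x ≤ 1 :=
  ciSup_le fun n => (bisect_fst_le_snd d n x).trans (bisect_snd_le_one d n x)

lemma neg_one_le_bisectLimit (x : X) : -1 ≤ bisectLimit d x :=
  (neg_one_le_bisect_fst d 0 x).trans (le_ciSup (bddAbove_range_bisect_fst d x) 0)

lemma bisectLimit_apply : bisectLimit d (d n) = bisectValue d n := by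
  have key : ∀ m, n < m → (bisect d m (d n)).1 = bisectValue d n := fun m hm => by
    rw [bisect_apply_of_lt d hm]
  apply le_antisymm
  · refine ciSup_le fun m => ?_
    rw [← key (max m n + 1) (by omega)]
    exact bisect_fst_monotone_step d (d n) (by omega)
  · rw [← key (n + 1) (by omega)]
    exact le_ciSup (bddAbove_range_bisect_fst d (d n)) (n + 1)

/-- A monotone function whose values along an order dense sequence are left bisecting does not jump
at a cut whose lower part has no maximum. -/
lemma LeftBisecting.le_of_isLUB {d : ℕ → X} {g : X → ℝ} (hd : LeftBisecting d (g ∘ d))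
    (hg : Monotone g) (hdense : ∀ s t, s < t → ∃ i, s ≤ d i ∧ d i ≤ t)
    {A : Set X} (hA : IsLowerSet A) (hmax : ∀ a ∈ A, ∃ a' ∈ A, a < a')
    {α β : ℝ} (hα : IsLUB (g '' A) α) (hβ : β ≤ 1) (hβA : ∀ x ∉ A, β ≤ g x) : β ≤ α := by
  classical
  by_contra! hlt
  have hup : ∀ a ∈ A, ∃ i, d i ∈ A ∧ a < d i := fun a ha => by
    obtain ⟨a', ha', h⟩ := hmax a ha
    obtain ⟨a'', ha'', h'⟩ := hmax a' ha'
    obtain ⟨i, h1, h2⟩ := hdense a' a'' h'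
    exact ⟨i, hA h2 ha'', h.trans_le h1⟩
  have hi : ∃ i, d i ∈ A ∧ 2 * α - β < g (d i) := by
    obtain ⟨_, ⟨a, ha, rfl⟩, h, -⟩ := hα.exists_between (show 2 * α - β < α by linarith)
    obtain ⟨i, hi, hai⟩ := hup a ha
    exact ⟨i, hi, h.trans_le (hg hai.le)⟩
  obtain ⟨hiA, hig⟩ := Nat.find_spec hi
  have hk := hup _ hiA
  obtain ⟨hkA, hik⟩ := Nat.find_spec hk
  have hlt' : Nat.find hi < Nat.find hk := by
    refine lt_of_le_of_ne (Nat.find_min' hi ⟨hkA, hig.trans_le (hg hik.le)⟩) fun h => ?_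
    exact hik.ne (congrArg d h)
  have h1 := hd _ _ hlt' hik β hβ fun j hj hle =>
    hβA _ fun hjA => Nat.find_min hk hj ⟨hjA, hik.trans_le hle⟩
  have h2 := hα.1 ⟨_, hkA, rfl⟩
  simp only [Function.comp_apply] at h1
  linarith

end Bisection

/-- A nonempty set of reals has a sequence that meets every nondegenerate interval in at least two
points. -/
lemma exists_seq_order_dense (S : Set ℝ) [Nonempty S] :
    ∃ d : ℕ → S, ∀ s t : S, s < t → ∃ i j, s ≤ d i ∧ d i < d j ∧ d j ≤ t := by
  obtain ⟨C, hC, hCd⟩ := TopologicalSpace.exists_countable_dense S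
  let R : Set S := {x | ∃ y, x < y ∧ ∀ z, ¬ (x < z ∧ z < y)}
  let L : Set S := {x | ∃ y, y < x ∧ ∀ z, ¬ (y < z ∧ z < x)}
  have hR : R.Countable := by
    refine Set.countable_of_injective_of_countable_image Subtype.val_injective.injOn ?_
    refine (countable_setOfPred_isolated_right_within (s := S)).mono ?_
    rintro _ ⟨x, ⟨y, hxy, h⟩, rfl⟩
    refine ⟨x.2, ?_⟩
    rw [← Filter.empty_mem_iff_bot, mem_nhdsWithin]
    refine ⟨Set.Iio y, isOpen_Iio, hxy, ?_⟩
    rintro z ⟨hzy, hzS, hxz⟩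
    exact h ⟨z, hzS⟩ ⟨hxz, hzy⟩
  have hL : L.Countable := by
    refine Set.countable_of_injective_of_countable_image Subtype.val_injective.injOn ?_
    refine (countable_setOfPred_isolated_left_within (s := S)).mono ?_
    rintro _ ⟨x, ⟨y, hyx, h⟩, rfl⟩
    refine ⟨x.2, ?_⟩
    rw [← Filter.empty_mem_iff_bot, mem_nhdsWithin]
    refine ⟨Set.Ioi y, isOpen_Ioi, hyx, ?_⟩
    rintro z ⟨hyz, hzS, hzx⟩
    exact h ⟨z, hzS⟩ ⟨hyz, hzx⟩
  have hne : (C ∪ R ∪ L).Nonempty := (hCd.nonempty.mono Set.subset_union_left).mono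
    Set.subset_union_left
  obtain ⟨d, hd⟩ := ((hC.union hR).union hL).exists_eq_range hne
  have hmem : ∀ x, x ∈ C ∪ R ∪ L → ∃ i, d i = x := fun x hx => by rwa [hd] at hx
  have hbetween : ∀ s t z : S, s < z → z < t → ∃ i, s < d i ∧ d i < t := by
    intro s t z hsz hzt
    obtain ⟨x, hx, hxC⟩ := hCd.inter_open_nonempty {x : S | s < x ∧ x < t}
      ((isOpen_Ioo (a := (s : ℝ)) (b := t)).preimage continuous_subtype_val) ⟨z, hsz, hzt⟩
    obtain ⟨i, rfl⟩ := hmem x (Or.inl (Or.inl hxC))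
    exact ⟨i, hx⟩
  have hjump : ∀ s t : S, s < t → (∀ z, ¬ (s < z ∧ z < t)) →
      ∃ i j, s ≤ d i ∧ d i < d j ∧ d j ≤ t := by
    intro s t hst h
    obtain ⟨i, rfl⟩ := hmem s (Or.inl (Or.inr ⟨t, hst, h⟩))
    obtain ⟨j, rfl⟩ := hmem t (Or.inr ⟨_, hst, h⟩)
    exact ⟨i, j, le_rfl, hst, le_rfl⟩
  refine ⟨d, fun s t hst => ?_⟩
  by_cases h : ∀ z, ¬ (s < z ∧ z < t)
  · exact hjump s t hst h
  push Not at h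
  obtain ⟨z, hsz, hzt⟩ := h
  obtain ⟨j, hsj, hjt⟩ := hbetween s t z hsz hzt
  by_cases h : ∀ z, ¬ (s < z ∧ z < d j)
  · obtain ⟨i, k, h1, h2, h3⟩ := hjump s _ hsj h
    exact ⟨i, k, h1, h2, h3.trans hjt.le⟩
  push Not at h
  obtain ⟨z, hsz, hzj⟩ := h
  obtain ⟨i, hsi, hij⟩ := hbetween s _ z hsz hzj
  exact ⟨i, j, hsi.le, hij, hjt.le⟩

/-- Every nonempty set of reals has a strictly increasing function that does not jump at any cut of
the set except where the lower part has a maximum and the upper part has a minimum. -/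
lemma exists_strictMono_forall_cut (S : Set ℝ) [Nonempty S] :
    ∃ g : S → ℝ, StrictMono g ∧ ∀ A : Set S, IsLowerSet A → A.Nonempty → Aᶜ.Nonempty →
      ∀ α β, IsLUB (g '' A) α → IsGLB (g '' Aᶜ) β → α < β → α ∈ g '' A ∧ β ∈ g '' Aᶜ := by
  obtain ⟨d, hd⟩ := exists_seq_order_dense S
  have hval : bisectLimit d ∘ d = bisectValue d := funext (bisectLimit_apply d)
  refine ⟨bisectLimit d, fun s t hst => ?_, fun A hA ⟨a₀, ha₀⟩ ⟨b₀, hb₀⟩ α β hα hβ hαβ => ?_⟩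
  · obtain ⟨i, j, h1, h2, h3⟩ := hd s t hst
    calc bisectLimit d s ≤ bisectLimit d (d i) := bisectLimit_mono d h1
      _ < bisectLimit d (d j) := by
        simpa only [bisectLimit_apply] using bisectValue_lt d h2
      _ ≤ bisectLimit d t := bisectLimit_mono d h3
  constructor
  · by_contra hα'
    refine hαβ.not_ge <| LeftBisecting.le_of_isLUB (d := d) (g := bisectLimit d)
      (hval ▸ leftBisecting_bisectValue d) (bisectLimit_mono d) (fun s t hst => ?_) hA ?_ hα
      ((hβ.1 ⟨b₀, hb₀, rfl⟩).trans (bisectLimit_le_one d b₀)) fun x hx => hβ.1 ⟨x, hx, rfl⟩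
    · obtain ⟨i, j, h1, h2, h3⟩ := hd s t hst
      exact ⟨i, h1, h2.le.trans h3⟩
    · by_contra! h
      obtain ⟨a, ha, hmax⟩ := h
      refine hα' ⟨a, ha, le_antisymm (hα.1 ⟨a, ha, rfl⟩) (hα.2 ?_)⟩
      rintro _ ⟨x, hx, rfl⟩
      exact bisectLimit_mono d (hmax x hx)
  · by_contra hβ'
    have hlub : IsLUB ((fun x : Sᵒᵈ => -bisectLimit d (OrderDual.ofDual x)) ''
        (OrderDual.ofDual ⁻¹' Aᶜ)) (-β) := by
      constructor
      · rintro _ ⟨x, hx, rfl⟩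
        exact neg_le_neg (hβ.1 ⟨_, hx, rfl⟩)
      · intro u hu
        refine neg_le.1 (hβ.2 ?_)
        rintro _ ⟨x, hx, rfl⟩
        exact neg_le.1 (hu ⟨OrderDual.toDual x, hx, rfl⟩)
    refine (neg_lt_neg hαβ).not_ge <| LeftBisecting.le_of_isLUB
      (d := fun n => OrderDual.toDual (d n)) ?_
      (fun x y h => neg_le_neg (bisectLimit_mono d h)) (fun s t hst => ?_)
      hA.compl.toDual ?_ hlub ?_ ?_
    · convert leftBisecting_dual_neg_bisectValue d using 1
      rw [← hval]
      rfl
    · obtain ⟨i, j, h1, h2, h3⟩ := hd (OrderDual.ofDual t) (OrderDual.ofDual s) hst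
      exact ⟨i, h2.le.trans h3, h1⟩
    · by_contra! h
      obtain ⟨b, hb, hmin⟩ := h
      refine hβ' ⟨OrderDual.ofDual b, hb, le_antisymm (hβ.2 ?_) (hβ.1 ⟨_, hb, rfl⟩)⟩
      rintro _ ⟨x, hx, rfl⟩
      exact bisectLimit_mono d (hmin (OrderDual.toDual x) hx)
    · have := hα.1 ⟨a₀, ha₀, rfl⟩
      have := neg_one_le_bisectLimit d a₀
      linarith
    · intro x hx
      exact neg_le_neg (hα.1 ⟨OrderDual.ofDual x, not_not.1 hx, rfl⟩)

/-- Debreu's Gap Lemma: every subset of ℝ admits a strictly increasing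
transformation all of whose gaps are singletons or open intervals. -/
theorem debreu_gap_lemma (S : Set ℝ) :
    ∃ g : ℝ → ℝ, StrictMonoOn g S ∧
      ∀ G : Set ℝ, IsGap (g '' S) G →
        (∃ x : ℝ, G = {x}) ∨ ∃ a b : ℝ, G = Set.Ioo a b := by
  rcases S.eq_empty_or_nonempty with rfl | hS
  · refine ⟨id, by simp [StrictMonoOn], fun G hG => ?_⟩
    obtain ⟨-, -, -, -, a, ha, -⟩ := hG
    simp at ha
  have : Nonempty S := hS.to_subtype
  obtain ⟨g, hg, hcut⟩ := exists_strictMono_forall_cut S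
  have hext : ∀ s : S, Function.extend Subtype.val g 0 (s : ℝ) = g s :=
    fun s => Subtype.val_injective.extend_apply g 0 s
  have himage : Function.extend Subtype.val g 0 '' S = Set.range g := by
    rw [Set.image_eq_range]
    exact congrArg Set.range (funext hext)
  refine ⟨Function.extend Subtype.val g 0, fun s hs t ht hst => ?_, fun G hG => ?_⟩
  · rw [hext ⟨s, hs⟩, hext ⟨t, ht⟩]
    exact hg hst
  rw [himage] at hG
  obtain ⟨⟨x₀, hx₀⟩, hGT, hGconv, hGmax, _, ⟨a, rfl⟩, _, ⟨b, rfl⟩, hab⟩ := hG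
  have hne : ∀ s, ∀ x ∈ G, g s ≠ x := fun s x hx h => hGT hx ⟨s, h⟩
  have hbelow : ∀ s, g s < x₀ → ∀ x ∈ G, g s < x := fun s hs x hx => by
    by_contra! h
    exact hGT (hGconv.out hx hx₀ ⟨h, hs.le⟩) ⟨s, rfl⟩
  have habove : ∀ s, x₀ < g s → ∀ x ∈ G, x < g s := fun s hs x hx => by
    by_contra! h
    exact hGT (hGconv.out hx₀ hx ⟨hs.le, h⟩) ⟨s, rfl⟩
  let A : Set S := {s | g s < x₀}
  have hAc : ∀ s ∈ Aᶜ, x₀ < g s := fun s hs => lt_of_le_of_ne (not_lt.1 hs) (hne s x₀ hx₀).symm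
  have haA : a ∈ A := lt_of_le_of_ne (hab x₀ hx₀).1 (hne a x₀ hx₀)
  have hbA : b ∈ Aᶜ := not_lt.2 (hab x₀ hx₀).2
  have hlow : IsLowerSet A := fun s t hts hs => (hg.monotone hts).trans_lt hs
  have hub : ∀ x ∈ G, x ∈ upperBounds (g '' A) := by
    rintro x hx _ ⟨s, hs, rfl⟩
    exact (hbelow s hs x hx).le
  have hlb : ∀ x ∈ G, x ∈ lowerBounds (g '' Aᶜ) := by
    rintro x hx _ ⟨s, hs, rfl⟩
    exact (habove s (hAc s hs) x hx).le
  have hα := isLUB_csSup (s := g '' A) ⟨_, a, haA, rfl⟩ ⟨x₀, hub x₀ hx₀⟩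
  have hβ := isGLB_csInf (s := g '' Aᶜ) ⟨_, b, hbA, rfl⟩ ⟨x₀, hlb x₀ hx₀⟩
  set α := sSup (g '' A)
  set β := sInf (g '' Aᶜ)
  have hGαβ : ∀ x ∈ G, α ≤ x ∧ x ≤ β := fun x hx => ⟨hα.2 (hub x hx), hβ.2 (hlb x hx)⟩
  rcases ((hGαβ x₀ hx₀).1.trans (hGαβ x₀ hx₀).2).eq_or_lt with heq | hlt
  · refine Or.inl ⟨x₀, Set.eq_singleton_iff_unique_mem.2 ⟨hx₀, fun x hx => ?_⟩⟩
    have h1 := hGαβ x hx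
    have h2 := hGαβ x₀ hx₀
    linarith
  · obtain ⟨⟨s, hs, hsα⟩, t, ht, htβ⟩ := hcut A hlow ⟨a, haA⟩ ⟨b, hbA⟩ α β hα hβ hlt
    refine Or.inr ⟨α, β, (hGmax _ Set.ordConnected_Ioo ?_ fun x hx => ?_).symm⟩
    · rintro _ ⟨h1, h2⟩ ⟨r, rfl⟩
      by_cases hr : r ∈ A
      · exact h1.not_ge (hα.1 ⟨r, hr, rfl⟩)
      · exact h2.not_ge (hβ.1 ⟨r, hr, rfl⟩)
    · exact ⟨hsα ▸ hbelow s hs x hx, htβ ▸ habove t (hAc t ht) x hx⟩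
end

section
/- Let X be a topological space and ≽ a total preorder on X that is upper semicontinuous and admits some utility representation. Then ≽ admits an upper semicontinuous utility representation. (Classical case of the paper's theorem that any numerically representable conditionally upper semicontinuous preference order admits a conditionally upper semicontinuous numerical representation.) -/
open scoped ENNReal in
/-- A countable family of closed sets that are upper sets for `u` and separate the strict upper
sections of `u` yields an upper semicontinuous function ordering points as `u` does. -/
theorem exists_usc_of_countable_closed_separating {X ι : Type*} [TopologicalSpace X] [Countable ι]
    (u : X → ℝ) (F : ι → Set X) (hclosed : ∀ i, IsClosed (F i))
    (hupper : ∀ i x y, u x ≤ u y → x ∈ F i → y ∈ F i)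
    (hsep : ∀ x y, u x < u y → ∃ i, y ∈ F i ∧ x ∉ F i) :
    ∃ v : X → ℝ, (∀ m : ℝ, IsClosed {x | m ≤ v x}) ∧ ∀ x y, u y ≤ u x ↔ v y ≤ v x := by
  obtain ⟨ε, hε, hsum⟩ := ENNReal.exists_pos_sum_of_countable one_ne_zero ι
  let f : ι → X → ℝ≥0∞ := fun i ↦ (F i)ᶜ.indicator fun _ ↦ (ε i : ℝ≥0∞)
  let h : X → ℝ≥0∞ := fun x ↦ ∑' i, f i x
  have hlsc : LowerSemicontinuous h := lowerSemicontinuous_tsum fun i ↦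
    (hclosed i).isOpen_compl.lowerSemicontinuous_indicator zero_le
  have hfin : ∀ x, h x ≠ ∞ := fun x ↦ ne_top_of_le_ne_top (hsum.trans ENNReal.one_lt_top).ne
    (ENNReal.tsum_le_tsum fun i ↦ Set.indicator_le_self' (fun _ _ ↦ zero_le) x)
  have hmono : ∀ x y, u y ≤ u x → ∀ i, f i x ≤ f i y := by
    intro x y hxy i
    by_cases hx : x ∈ F i
    · simp [f, hx]
    · have hy : y ∉ F i := fun hy ↦ hx (hupper i y x hxy hy)
      simp [f, hx, hy]
  have hstrict : ∀ x y, u x < u y → h y < h x := by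
    intro x y hxy
    obtain ⟨i, hy, hx⟩ := hsep x y hxy
    refine ENNReal.tsum_lt_tsum (i := i) (hfin y) (hmono y x hxy.le) ?_
    simpa [f, hx, hy] using hε i
  refine ⟨fun x ↦ -(h x).toReal, fun m ↦ ?_, fun x y ↦ ?_⟩
  · rcases lt_or_ge 0 m with hm | hm
    · convert isClosed_empty (X := X)
      ext x
      have := (h x).toReal_nonneg
      simp only [Set.mem_ofPred_eq, Set.mem_empty_iff_false, iff_false]
      linarith
    · convert hlsc.isClosed_preimage (ENNReal.ofReal (-m)) using 1
      ext x
      simp only [Set.mem_ofPred_eq, Set.mem_preimage, Set.mem_Iic]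
      rw [ENNReal.le_ofReal_iff_toReal_le (hfin x) (by linarith), le_neg]
  · rw [neg_le_neg_iff, ENNReal.toReal_le_toReal (hfin x) (hfin y)]
    refine ⟨fun hxy ↦ ENNReal.tsum_le_tsum (hmono x y hxy), fun hxy ↦ ?_⟩
    by_contra! hlt
    exact (hstrict x y hlt).not_ge hxy

/-- Any numerically representable upper semicontinuous total preorder admits an
upper semicontinuous utility representation. -/
theorem usc_representation_of_representable
    {X : Type*} [TopologicalSpace X] (R : X → X → Prop)
    (hrefl : ∀ x, R x x)
    (htrans : ∀ x y z, R x y → R y z → R x z)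
    (htotal : ∀ x y, R x y ∨ R y x)
    (husc : ∀ x, IsClosed {y | R y x})
    (hrep : ∃ u : X → ℝ, ∀ x y, R x y ↔ u y ≤ u x) :
    ∃ u : X → ℝ, (∀ m : ℝ, IsClosed {x | m ≤ u x}) ∧
      ∀ x y, R x y ↔ u y ≤ u x := by
  obtain ⟨u, hu⟩ := hrep
  simp only [hu] at husc ⊢
  -- The first family separates points with a utility level strictly between theirs,
  -- the second one separates the endpoints of the gaps in the range of `u`.
  refine exists_usc_of_countable_closed_separating u
    (Sum.elim (fun q : ℚ ↦ {x | ∀ y, u y < q → u y ≤ u x})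
      (fun q : ℚ ↦ {x | IsClosed {x | (q : ℝ) ≤ u x} → (q : ℝ) ≤ u x})) ?_ ?_ ?_
  · rintro (q | q)
    · simp only [Sum.elim_inl, Set.ofPred_forall]
      exact isClosed_iInter fun y ↦ isClosed_iInter fun _ ↦ husc y
    · by_cases hq : IsClosed {x | (q : ℝ) ≤ u x} <;> simp [hq]
  · rintro (q | q) x y hxy hx
    · exact fun z hz ↦ (hx z hz).trans hxy
    · exact fun hq ↦ (hx hq).trans hxy
  · intro x y hxy
    by_cases hz : ∃ z, u x < u z ∧ u z < u y
    · obtain ⟨z, hxz, hzy⟩ := hz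
      obtain ⟨q, hzq, hqy⟩ := exists_rat_btwn hzy
      exact ⟨.inl q, fun w hw ↦ (hw.trans hqy).le, fun hx ↦ (hx z hzq).not_gt hxz⟩
    · push Not at hz
      obtain ⟨q, hxq, hqy⟩ := exists_rat_btwn hxy
      have hq : IsClosed {w | (q : ℝ) ≤ u w} := by
        convert husc y using 3 with w
        exact ⟨fun hw ↦ hz w (hxq.trans_le hw), hqy.le.trans⟩
      exact ⟨.inr q, fun _ ↦ hqy.le, fun hx ↦ (hx hq).not_gt hxq⟩
end

section
/- Let X be a second countable topological space and ≽ an upper semicontinuous total preorder on X. Then ≽ admits an upper semicontinuous utility representation. (Rader's theorem, the classical case of the paper's theorem on representations of conditionally upper semicontinuous preference orders on conditionally second countable spaces.) -/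
/-- Strict inclusion of subsets of a countable type is reflected by a nonnegative real-valued
function. -/
theorem exists_strictMono_set_real (ι : Type*) [Countable ι] :
    ∃ f : Set ι → ℝ, StrictMono f ∧ ∀ s, 0 ≤ f s := by
  classical
  obtain ⟨_⟩ := nonempty_encodable ι
  let w : ι → ℝ := fun i => (1 / 2 : ℝ) ^ Encodable.encode i
  have hw : Summable w := summable_geometric_two_encode
  have hpos : ∀ i, 0 < w i := fun i => by positivity
  refine ⟨fun s => ∑' i, s.indicator w i, fun s t hst => ?_, fun s => ?_⟩
  · obtain ⟨hsub, i, hit, his⟩ := Set.ssubset_iff_exists.1 hst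
    refine Summable.tsum_lt_tsum (i := i) (fun j => ?_) ?_ (hw.indicator s) (hw.indicator t)
    · exact Set.indicator_le_indicator_of_subset hsub (fun j => (hpos j).le) j
    · simpa [his, hit] using hpos i
  · exact tsum_nonneg fun i => Set.indicator_nonneg (fun j _ => (hpos j).le) i

/-- A total preorder whose strict lower sections are open in a second countable space has a
nonnegative utility representation (not necessarily semicontinuous). -/
theorem exists_nonneg_strictMono_of_isOpen_lower {X : Type*} [TopologicalSpace X]
    [SecondCountableTopology X] (R : X → X → Prop)
    (hrefl : ∀ x, R x x) (htrans : ∀ x y z, R x y → R y z → R x z)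
    (hopen : ∀ x, IsOpen {y | ¬ R y x}) :
    ∃ v : X → ℝ, (∀ x, 0 ≤ v x) ∧ (∀ x y, R x y → v y ≤ v x) ∧
      ∀ x y, ¬ R y x → R x y → v y < v x := by
  let B := TopologicalSpace.countableBasis X
  have : Countable B := (TopologicalSpace.countable_countableBasis X).to_subtype
  obtain ⟨f, hf, hf0⟩ := exists_strictMono_set_real B
  let S : X → Set B := fun x => {b | (b : Set X) ⊆ {y | ¬ R y x}}
  have hS : ∀ x y, R x y → S y ⊆ S x := fun x y hxy b hb z hz hzx =>
    hb hz (htrans _ _ _ hzx hxy)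
  refine ⟨fun x => f (S x), fun x => hf0 _, fun x y h => hf.monotone (hS x y h),
    fun x y hyx hxy => hf ?_⟩
  obtain ⟨b, hb, hyb, hbx⟩ :=
    (TopologicalSpace.isBasis_countableBasis X).exists_subset_of_mem_open
      (show y ∈ {y | ¬ R y x} from hyx) (hopen x)
  exact Set.ssubset_iff_exists.2 ⟨hS x y hxy, ⟨b, hb⟩, hbx, fun h => h hyb (hrefl y)⟩

/-- Rader's theorem: an upper semicontinuous total preorder on a second countable
topological space admits an upper semicontinuous utility representation. -/
theorem rader_usc_representation
    {X : Type*} [TopologicalSpace X] [SecondCountableTopology X]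
    (R : X → X → Prop)
    (hrefl : ∀ x, R x x)
    (htrans : ∀ x y z, R x y → R y z → R x z)
    (htotal : ∀ x y, R x y ∨ R y x)
    (husc : ∀ x, IsClosed {y | R y x}) :
    ∃ u : X → ℝ, (∀ m : ℝ, IsClosed {x | m ≤ u x}) ∧
      ∀ x y, R x y ↔ u y ≤ u x := by
  classical
  have hopen : ∀ x, IsOpen {y | ¬ R y x} := fun x => (husc x).isOpen_compl
  obtain ⟨v, hv0, hvmono, hvlt⟩ :=
    exists_nonneg_strictMono_of_isOpen_lower R hrefl htrans hopen
  replace hvlt : ∀ x y, ¬ R x y → v x < v y := fun x y h =>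
    hvlt y x h ((htotal x y).resolve_left h)
  -- `v` is replaced by its right limit at the points that are limits from above.
  let Q : X → Prop := fun x => (∃ w, ¬ R x w) ∧ ∀ w, ¬ R x w → ∃ z, ¬ R x z ∧ ¬ R z w
  let u : X → ℝ := fun x => if Q x then sInf (v '' {w | ¬ R x w}) else v x
  have hbdd : ∀ x, BddBelow (v '' {w | ¬ R x w}) := fun x =>
    ⟨0, by rintro _ ⟨w, -, rfl⟩; exact hv0 w⟩
  have huQ : ∀ x, Q x → u x = sInf (v '' {w | ¬ R x w}) := fun x h => if_pos h
  have hunQ : ∀ x, ¬ Q x → u x = v x := fun x h => if_neg h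
  have hvu : ∀ x, v x ≤ u x := fun x => by
    by_cases h : Q x
    · rw [huQ x h]
      refine le_csInf (Set.Nonempty.image _ h.1) ?_
      rintro _ ⟨w, hw, rfl⟩
      exact (hvlt x w hw).le
    · exact (hunQ x h).ge
  have huv : ∀ x w, ¬ R x w → u x ≤ v w := fun x w hw => by
    by_cases h : Q x
    · rw [huQ x h]
      exact csInf_le (hbdd x) ⟨w, hw, rfl⟩
    · exact (hunQ x h).trans_le (hvlt x w hw).le
  have hult : ∀ x y, ¬ R x y → u x < u y := fun x y hxy => by
    by_cases h : Q x
    · obtain ⟨z, hxz, hzy⟩ := h.2 y hxy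
      exact (huv x z hxz).trans_lt ((hvlt z y hzy).trans_le (hvu y))
    · rw [hunQ x h]
      exact (hvlt x y hxy).trans_le (hvu y)
  have humono : ∀ x y, R x y → u y ≤ u x := fun x y hxy => by
    by_cases hyx : R y x
    · have hR : ∀ w, R x w ↔ R y w := fun w =>
        ⟨htrans _ _ _ hyx, htrans _ _ _ hxy⟩
      have hv : v x = v y := le_antisymm (hvmono _ _ hyx) (hvmono _ _ hxy)
      simp only [u, Q, hR, hv, le_refl]
    · exact (hult y x hyx).le
  refine ⟨u, fun m => ?_, fun x y => ⟨humono x y, fun h => ?_⟩⟩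
  · rw [← isOpen_compl_iff, isOpen_iff_mem_nhds]
    intro x hx
    replace hx : u x < m := not_le.1 hx
    by_cases hmax : ∃ w, ¬ R x w
    · obtain ⟨w, hxw, hw⟩ : ∃ w, ¬ R x w ∧ ∀ y, ¬ R y w → u y < m := by
        by_cases h : Q x
        · rw [huQ x h] at hx
          obtain ⟨_, ⟨w, hxw, rfl⟩, hwm⟩ :=
            exists_lt_of_csInf_lt (Set.Nonempty.image _ h.1) hx
          exact ⟨w, hxw, fun y hy => (huv y w hy).trans_lt hwm⟩
        · obtain ⟨w, hxw, hgap⟩ : ∃ w, ¬ R x w ∧ ∀ z, ¬ R x z → R z w := by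
            by_contra! hcon
            exact h ⟨hmax, hcon⟩
          refine ⟨w, hxw, fun y hy => (humono x y ?_).trans_lt hx⟩
          by_contra hxy
          exact hy (hgap y hxy)
      exact Filter.mem_of_superset ((hopen w).mem_nhds hxw) fun y hy => not_le.2 (hw y hy)
    · push Not at hmax
      exact Filter.univ_mem' fun y => not_le.2 ((humono x y (hmax y)).trans_lt hx)
  · by_contra hxy
    exact (hult x y hxy).not_ge h
end

section
/- Let X be a second countable topological space and ≽ a total preorder on X such that for every x ∈ X both the upper contour set {y ∈ X : y ≽ x} and the lower contour set {y ∈ X : x ≽ y} are closed. Then there exists a continuous function u : X → ℝ with x ≽ y if and only if u(x) ≥ u(y). (The continuous addendum to Rader's theorem, classical case of the paper's Theorem.) -/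
open Set

namespace Urysohns.CU

variable {X : Type*} [TopologicalSpace X] [Preorder X] {P : Set X → Set X → Prop}

theorem monotone_approx (hP : ∀ C U, P C U → IsLowerSet U) (c : CU P) (n : ℕ) :
    Monotone (c.approx n) := by
  induction n generalizing c with
  | zero =>
    intro x y hxy
    by_cases hx : x ∈ c.U
    · rw [approx, indicator_of_notMem (by simpa using hx)]
      exact c.approx_nonneg 0 y
    · rw [c.approx_of_notMem_U 0 hx,
        c.approx_of_notMem_U 0 fun hy => hx (hP _ _ c.P_C_U hxy hy)]
  | succ n ih => exact fun x y hxy => midpoint_le_midpoint (ih _ hxy) (ih _ hxy)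

theorem monotone_lim (hP : ∀ C U, P C U → IsLowerSet U) (c : CU P) : Monotone c.lim :=
  fun _ y hxy => ciSup_mono (c.bddAbove_range_approx y) fun n => c.monotone_approx hP n hxy

end Urysohns.CU

section TotalPreorder

variable {X : Type*} [TopologicalSpace X] [Preorder X] [Std.Total (α := X) (· ≤ ·)]

theorem isOpen_Iio_of_total [ClosedIciTopology X] (a : X) : IsOpen (Iio a) := by
  have h : Iio a = (Ici a)ᶜ := by
    ext x
    exact ⟨fun hx => hx.not_ge, fun hx => ((total_of (· ≤ ·) a x).resolve_left hx).lt_of_not_ge hx⟩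
  exact h ▸ isClosed_Ici.isOpen_compl

variable [ClosedIciTopology X] [ClosedIicTopology X]

/-- In a total preorder, a closed lower set and an open lower set containing it can be separated
by an open lower set and a closed lower set. -/
theorem IsLowerSet.exists_isOpen_isClosed_between {C U : Set X} (hC : IsClosed C)
    (hC' : IsLowerSet C) (hU : IsOpen U) (hU' : IsLowerSet U) (hCU : C ⊆ U) :
    ∃ V D, IsOpen V ∧ IsLowerSet V ∧ IsClosed D ∧ IsLowerSet D ∧ C ⊆ V ∧ V ⊆ D ∧ D ⊆ U := by
  by_cases h : U ⊆ C
  · obtain rfl := hCU.antisymm h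
    exact ⟨C, C, hU, hU', hC, hC', subset_rfl, subset_rfl, subset_rfl⟩
  · obtain ⟨x, hxU, hxC⟩ := not_subset.1 h
    refine ⟨Iio x, Iic x, isOpen_Iio_of_total x, isLowerSet_Iio x, isClosed_Iic, isLowerSet_Iic x,
      fun c hc => ?_, Iio_subset_Iic_self, fun y hy => hU' hy hxU⟩
    have hxc : ¬ x ≤ c := fun h => hxC (hC' h hc)
    exact ((total_of (· ≤ ·) x c).resolve_left hxc).lt_of_not_ge hxc

/-- Monotone version of Urysohn's lemma in a total preorder with closed rays. -/
theorem exists_continuous_monotone_lt_of_lt {a b : X} (hab : a < b) :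
    ∃ f : X → ℝ, Continuous f ∧ Monotone f ∧ (∀ x, f x ∈ Icc (0 : ℝ) 1) ∧ f a < f b := by
  -- Closures of lower sets need not be lower sets, so only a closed lower set in between is kept.
  let P : Set X → Set X → Prop := fun C U =>
    IsLowerSet U ∧ ∃ D, IsClosed D ∧ IsLowerSet D ∧ C ⊆ D ∧ D ⊆ U
  let c : Urysohns.CU P :=
    { C := Iic a
      U := Iio b
      P_C_U := ⟨isLowerSet_Iio b, Iic a, isClosed_Iic, isLowerSet_Iic a, subset_rfl,
        Iic_subset_Iio.2 hab⟩
      closed_C := isClosed_Iic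
      open_U := isOpen_Iio_of_total b
      subset := Iic_subset_Iio.2 hab
      hP := by
        rintro C U - ⟨hU', D, hD, hD', hCD, hDU⟩ hU -
        obtain ⟨V, E, hV, hV', hE, hE', hDV, hVE, hEU⟩ :=
          hD'.exists_isOpen_isClosed_between hD hU hU' hDU
        have hVE' : closure V ⊆ E := closure_minimal hVE hE
        exact ⟨V, hV, hCD.trans hDV, hVE'.trans hEU, ⟨hV', D, hD, hD', hCD, hDV⟩,
          hU', E, hE, hE', hVE', hEU⟩ }
  refine ⟨c.lim, c.continuous_lim, c.monotone_lim fun _ _ h => h.1, c.lim_mem_Icc, ?_⟩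
  rw [c.lim_of_mem_C a self_mem_Iic, c.lim_of_notMem_U b self_notMem_Iio]
  exact zero_lt_one

theorem exists_continuous_monotone_strictMono [SecondCountableTopology X] :
    ∃ u : X → ℝ, Continuous u ∧ Monotone u ∧ StrictMono u := by
  let F := {f : X → ℝ // Continuous f ∧ Monotone f ∧ ∀ x, f x ∈ Icc (0 : ℝ) 1}
  have : Nonempty F := ⟨⟨0, continuous_zero, monotone_const, fun _ => ⟨le_rfl, zero_le_one⟩⟩⟩
  obtain ⟨T, hT, hTU⟩ := TopologicalSpace.isOpen_iUnion_countable
    (fun f : F => {p : X × X | f.1 p.1 < f.1 p.2}) fun f =>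
      isOpen_lt (f.2.1.comp continuous_fst) (f.2.1.comp continuous_snd)
  obtain ⟨g, hg⟩ := countable_iff_exists_subset_range.1 hT
  let w : ℕ → ℝ := fun n => 1 / 2 / 2 ^ n
  have hw n : 0 < w n := by positivity
  have hsum : Summable w := summable_geometric_two' 1
  have hbound n x : ‖w n * (g n).1 x‖ ≤ w n := by
    obtain ⟨h0, h1⟩ := (g n).2.2.2 x
    rw [Real.norm_of_nonneg (mul_nonneg (hw n).le h0)]
    exact mul_le_of_le_one_right (hw n).le h1
  have hsum' x : Summable fun n => w n * (g n).1 x := hsum.of_norm_bounded fun n => hbound n x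
  have hle {x y : X} (hxy : x ≤ y) n : w n * (g n).1 x ≤ w n * (g n).1 y :=
    mul_le_mul_of_nonneg_left ((g n).2.2.1 hxy) (hw n).le
  refine ⟨fun x => ∑' n, w n * (g n).1 x,
    continuous_tsum (fun n => continuous_const.mul (g n).2.1) hsum hbound,
    fun x y hxy => (hsum' x).tsum_le_tsum (hle hxy) (hsum' y), fun x y hxy => ?_⟩
  obtain ⟨f, hf, hf', hf01, hfxy⟩ := exists_continuous_monotone_lt_of_lt hxy
  have hmem : (x, y) ∈ ⋃ f : F, {p : X × X | f.1 p.1 < f.1 p.2} :=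
    mem_iUnion.2 ⟨⟨f, hf, hf', hf01⟩, hfxy⟩
  rw [← hTU] at hmem
  obtain ⟨φ, hφT, hφ⟩ := mem_iUnion₂.1 hmem
  obtain ⟨n, rfl⟩ := hg hφT
  exact Summable.tsum_lt_tsum (hle hxy.le) (mul_lt_mul_of_pos_left hφ (hw n)) (hsum' x) (hsum' y)

end TotalPreorder

/-- Continuous Rader/Debreu theorem: a continuous total preorder on a second
countable topological space admits a continuous utility representation. -/
theorem rader_continuous_representation
    {X : Type*} [TopologicalSpace X] [SecondCountableTopology X]
    (R : X → X → Prop)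
    (hrefl : ∀ x, R x x)
    (htrans : ∀ x y z, R x y → R y z → R x z)
    (htotal : ∀ x y, R x y ∨ R y x)
    (husc : ∀ x, IsClosed {y | R y x})
    (hlsc : ∀ x, IsClosed {y | R x y}) :
    ∃ u : X → ℝ, Continuous u ∧ ∀ x y, R x y ↔ u y ≤ u x := by
  let _ : Preorder X :=
    { le := fun x y => R y x
      le_refl := hrefl
      le_trans := fun x y z hxy hyz => htrans z y x hyz hxy }
  have : Std.Total (α := X) (· ≤ ·) := ⟨fun x y => htotal y x⟩
  have : ClosedIciTopology X := ⟨husc⟩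
  have : ClosedIicTopology X := ⟨hlsc⟩
  obtain ⟨u, hu, hmono, hstrict⟩ := exists_continuous_monotone_strictMono (X := X)
  refine ⟨u, hu, fun x y => ⟨fun h => hmono h, fun h => ?_⟩⟩
  by_contra hxy
  exact (hstrict (lt_of_le_not_ge ((htotal x y).resolve_left hxy) hxy)).not_ge h
end

section
/- Let X be a convex subset of a real vector space and ≽ a total preorder on X satisfying the independence axiom and the Archimedean axiom. If x ≻ z and x ≽ y ≽ z, then there exists a unique α ∈ [0,1] such that y ∼ αx + (1−α)z. (Part (ii) of the paper's Lemma on mixture preferences, classical case.) -/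
/-- The strict part of a binary relation. -/
def SPref {V : Type*} (R : V → V → Prop) (x y : V) : Prop := R x y ∧ ¬ R y x

/-- Under independence, if `x ≻ z` then mixtures of `x` and `z` with a larger weight on `x`
are strictly preferred. -/
theorem SPref.mixture_strictMono
    {V : Type*} [AddCommGroup V] [Module ℝ V] {X : Set V} (hX : Convex ℝ X)
    {R : V → V → Prop}
    (hind : ∀ x ∈ X, ∀ y ∈ X, ∀ z ∈ X, ∀ α : ℝ, 0 < α → α ≤ 1 →
      SPref R x y → SPref R (α • x + (1 - α) • z) (α • y + (1 - α) • z))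
    {x z : V} (hx : x ∈ X) (hz : z ∈ X) (hxz : SPref R x z)
    {a b : ℝ} (hb : 0 ≤ b) (hba : b < a) (ha : a ≤ 1) :
    SPref R (a • x + (1 - a) • z) (b • x + (1 - b) • z) := by
  have ha0 : 0 < a := hb.trans_lt hba
  have hmem : a • x + (1 - a) • z ∈ X := hX hx hz ha0.le (by linarith) (by ring)
  have haz : SPref R (a • x + (1 - a) • z) z := by
    have h := hind x hx z hz z hz a ha0 ha hxz
    rwa [show a • z + (1 - a) • z = z by module] at h
  have ht : b / a < 1 := (div_lt_one ha0).2 hba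
  have ht0 : 0 ≤ b / a := by positivity
  have h := hind _ hmem z hz _ hmem (1 - b / a) (by linarith) (by linarith) haz
  obtain ⟨t, rfl⟩ : ∃ t, b = t * a := ⟨b / a, by field_simp⟩
  rw [mul_div_cancel_right₀ t ha0.ne'] at h
  convert h using 1 <;> module

/-- Unique calibration: under independence and the Archimedean axiom, if `x ≻ z`
and `x ≽ y ≽ z`, there is a unique `α ∈ [0,1]` with `y ∼ αx + (1-α)z`. -/
theorem mixture_unique_calibration
    {V : Type*} [AddCommGroup V] [Module ℝ V] (X : Set V) (hX : Convex ℝ X)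
    (R : V → V → Prop)
    (hrefl : ∀ x ∈ X, R x x)
    (htrans : ∀ x ∈ X, ∀ y ∈ X, ∀ z ∈ X, R x y → R y z → R x z)
    (htotal : ∀ x ∈ X, ∀ y ∈ X, R x y ∨ R y x)
    (hind : ∀ x ∈ X, ∀ y ∈ X, ∀ z ∈ X, ∀ α : ℝ, 0 < α → α ≤ 1 →
      SPref R x y → SPref R (α • x + (1 - α) • z) (α • y + (1 - α) • z))
    (harch : ∀ x ∈ X, ∀ y ∈ X, ∀ z ∈ X, SPref R x y → SPref R y z →
      ∃ α ∈ Set.Ioo (0:ℝ) 1, ∃ β ∈ Set.Ioo (0:ℝ) 1,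
        SPref R (α • x + (1 - α) • z) y ∧ SPref R y (β • x + (1 - β) • z))
    {x y z : V} (hx : x ∈ X) (hy : y ∈ X) (hz : z ∈ X)
    (hxz : SPref R x z) (hxy : R x y) (hyz : R y z) :
    ∃! α : ℝ, α ∈ Set.Icc (0:ℝ) 1 ∧
      R y (α • x + (1 - α) • z) ∧ R (α • x + (1 - α) • z) y := by
  have mem : ∀ {a : ℝ}, 0 ≤ a → a ≤ 1 → a • x + (1 - a) • z ∈ X := fun h0 h1 =>
    hX hx hz h0 (by linarith) (by ring)
  have mono : ∀ {a b : ℝ}, 0 ≤ b → b < a → a ≤ 1 →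
      SPref R (a • x + (1 - a) • z) (b • x + (1 - b) • z) := fun hb hba ha =>
    SPref.mixture_strictMono hX hind hx hz hxz hb hba ha
  refine existsUnique_of_exists_of_unique ?_ ?_
  · by_cases hyx : R y x
    · exact ⟨1, by simp, by simpa using hyx, by simpa using hxy⟩
    by_cases hzy : R z y
    · exact ⟨0, by simp, by simpa using hyz, by simpa using hzy⟩
    let S : Set ℝ := {a | (0 ≤ a ∧ a ≤ 1) ∧ R y (a • x + (1 - a) • z)}
    have h0S : (0 : ℝ) ∈ S := ⟨by simp, by simpa using hyz⟩
    have hbdd : BddAbove S := ⟨1, fun a ha => ha.1.2⟩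
    have hs0 : 0 ≤ sSup S := le_csSup hbdd h0S
    have hs1 : sSup S ≤ 1 := csSup_le ⟨0, h0S⟩ fun a ha => ha.1.2
    have hm := mem hs0 hs1
    refine ⟨sSup S, ⟨hs0, hs1⟩, ?_, ?_⟩
    · by_contra hn
      have hpos : 0 < sSup S := by
        refine hs0.lt_of_ne fun h => hn ?_
        rw [← h]
        simpa using hyz
      obtain ⟨α, hα, -, -, hαy, -⟩ := harch _ hm y hy z hz
        ⟨(htotal _ hm y hy).resolve_right hn, hn⟩ ⟨hyz, hzy⟩
      rw [show α • (sSup S • x + (1 - sSup S) • z) + (1 - α) • z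
        = (α * sSup S) • x + (1 - α * sSup S) • z by module] at hαy
      have hlt : α * sSup S < sSup S := mul_lt_of_lt_one_left hpos hα.2
      have hαs : 0 ≤ α * sSup S := mul_nonneg hα.1.le hs0
      obtain ⟨b, hb, hαb⟩ := exists_lt_of_lt_csSup ⟨0, h0S⟩ hlt
      exact hαy.2 (htrans _ hy _ (mem hb.1.1 hb.1.2) _ (mem hαs (hlt.le.trans hs1)) hb.2
        (mono hαs hαb hb.1.2).1)
    · by_contra hn
      have hlt : sSup S < 1 := by
        refine hs1.lt_of_ne fun h => hn ?_
        rw [h]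
        simpa using hxy
      obtain ⟨-, -, β, hβ, -, hyβ⟩ := harch x hx y hy _ hm ⟨hxy, hyx⟩
        ⟨(htotal _ hm y hy).resolve_left hn, hn⟩
      rw [show β • x + (1 - β) • (sSup S • x + (1 - sSup S) • z)
        = (β + (1 - β) * sSup S) • x + (1 - (β + (1 - β) * sSup S)) • z by module] at hyβ
      have hgap : 0 < β * (1 - sSup S) := mul_pos hβ.1 (by linarith)
      have hgap' : 0 ≤ (1 - β) * (1 - sSup S) :=
        mul_nonneg (by linarith [hβ.2]) (by linarith)
      have := le_csSup hbdd (show β + (1 - β) * sSup S ∈ S from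
        ⟨⟨by linarith, by linarith⟩, hyβ.1⟩)
      linarith
  · have no_gap : ∀ {a b : ℝ}, 0 ≤ b → a ≤ 1 → R y (a • x + (1 - a) • z) →
        R (b • x + (1 - b) • z) y → ¬ b < a := fun {a b} hb ha hya hby hba =>
      (mono hb hba ha).2 (htrans _ (mem hb (hba.le.trans ha)) _ hy _
        (mem (hb.trans hba.le) ha) hby hya)
    rintro a b ⟨ha, hya, hay⟩ ⟨hb, hyb, hby⟩
    exact le_antisymm (not_lt.1 (no_gap hb.1 ha.2 hya hby))
      (not_lt.1 (no_gap ha.1 hb.2 hyb hay))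
end

section
/- Let X be a convex subset of a real vector space and ≽ a total preorder on X satisfying the independence axiom and the Archimedean axiom. Then there exists an affine function u : X → ℝ such that x ≽ y if and only if u(x) ≥ u(y). (Existence part of the von Neumann–Morgenstern mixture-space theorem, the classical case of the paper's Theorem on conditionally affine representations.) -/
/-- A total preorder on the convex set `X` satisfying independence and the Archimedean axiom. -/
structure IsVNMPreference {V : Type*} [AddCommGroup V] [Module ℝ V] (X : Set V)
    (R : V → V → Prop) : Prop where
  convex : Convex ℝ X
  refl : ∀ x ∈ X, R x x
  trans : ∀ x ∈ X, ∀ y ∈ X, ∀ z ∈ X, R x y → R y z → R x z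
  total : ∀ x ∈ X, ∀ y ∈ X, R x y ∨ R y x
  indep : ∀ x ∈ X, ∀ y ∈ X, ∀ z ∈ X, ∀ α : ℝ, 0 < α → α ≤ 1 →
    SPref R x y → SPref R (α • x + (1 - α) • z) (α • y + (1 - α) • z)
  arch : ∀ x ∈ X, ∀ y ∈ X, ∀ z ∈ X, SPref R x y → SPref R y z →
    ∃ α ∈ Set.Ioo (0 : ℝ) 1, ∃ β ∈ Set.Ioo (0 : ℝ) 1,
      SPref R (α • x + (1 - α) • z) y ∧ SPref R y (β • x + (1 - β) • z)

namespace IsVNMPreference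

variable {V : Type*} [AddCommGroup V] [Module ℝ V] {X : Set V} {R : V → V → Prop}
  {x y z x' y' : V} {α : ℝ}

theorem mix_mem (h : IsVNMPreference X R) (hx : x ∈ X) (hy : y ∈ X) (h0 : 0 ≤ α) (h1 : α ≤ 1) :
    α • x + (1 - α) • y ∈ X :=
  h.convex hx hy h0 (by linarith) (by ring)

theorem flip (h : IsVNMPreference X R) : IsVNMPreference X (flip R) where
  convex := h.convex
  refl := h.refl
  trans x hx y hy z hz hxy hyz := h.trans z hz y hy x hx hyz hxy
  total x hx y hy := h.total y hy x hx
  indep x hx y hy z hz α h0 h1 hxy := h.indep y hy x hx z hz α h0 h1 hxy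
  arch x hx y hy z hz hxy hyz := by
    obtain ⟨α, hα, β, hβ, h₁, h₂⟩ := h.arch z hz y hy x hx hyz hxy
    refine ⟨1 - β, ⟨by linarith [hβ.2], by linarith [hβ.1]⟩,
      1 - α, ⟨by linarith [hα.2], by linarith [hα.1]⟩, ?_, ?_⟩
    · rw [sub_sub_cancel, add_comm]
      exact h₂
    · rw [sub_sub_cancel, add_comm]
      exact h₁

theorem spref_of_not (h : IsVNMPreference X R) (hx : x ∈ X) (hy : y ∈ X) (hxy : ¬ R x y) :
    SPref R y x :=
  ⟨(h.total x hx y hy).resolve_left hxy, hxy⟩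

theorem spref_of_pref_of_spref (h : IsVNMPreference X R) (hx : x ∈ X) (hy : y ∈ X) (hz : z ∈ X)
    (hxy : R x y) (hyz : SPref R y z) : SPref R x z :=
  ⟨h.trans x hx y hy z hz hxy hyz.1, fun hzx => hyz.2 (h.trans z hz x hx y hy hzx hxy)⟩

theorem spref_of_spref_of_pref (h : IsVNMPreference X R) (hx : x ∈ X) (hy : y ∈ X) (hz : z ∈ X)
    (hxy : SPref R x y) (hyz : R y z) : SPref R x z :=
  ⟨h.trans x hx y hy z hz hxy.1 hyz, fun hzx => hxy.2 (h.trans y hy z hz x hx hyz hzx)⟩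

theorem mix_spref_mix (h : IsVNMPreference X R) (hx : x ∈ X) (hy : y ∈ X) (hx' : x' ∈ X)
    (hy' : y' ∈ X) (h0 : 0 < α) (h1 : α < 1) (hxy : SPref R x y) (hxy' : SPref R x' y') :
    SPref R (α • x + (1 - α) • x') (α • y + (1 - α) • y') := by
  have step := h.indep x' hx' y' hy' y hy (1 - α) (by linarith) (by linarith) hxy'
  rw [sub_sub_cancel, add_comm, add_comm ((1 - α) • y')] at step
  exact h.spref_of_spref_of_pref (h.mix_mem hx hx' h0.le h1.le) (h.mix_mem hy hx' h0.le h1.le)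
    (h.mix_mem hy hy' h0.le h1.le) (h.indep x hx y hy x' hx' α h0 h1.le hxy) step.1

theorem mix_spref (h : IsVNMPreference X R) (hx : x ∈ X) (hy : y ∈ X) (hz : z ∈ X)
    (h0 : 0 < α) (h1 : α < 1) (hxz : SPref R x z) (hyz : SPref R y z) :
    SPref R (α • x + (1 - α) • y) z := by
  have key := h.mix_spref_mix hx hz hy hz h0 h1 hxz hyz
  rwa [← add_smul, add_sub_cancel, one_smul] at key

/-- The set of elements weakly preferred to `z` is convex. -/
theorem mix_pref (h : IsVNMPreference X R) (hx : x ∈ X) (hy : y ∈ X) (hz : z ∈ X)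
    (h0 : 0 < α) (h1 : α < 1) (hxz : R x z) (hyz : R y z) : R (α • x + (1 - α) • y) z := by
  by_contra hm
  have hmX := h.mix_mem hx hy h0.le h1.le
  have hzm := h.spref_of_not hmX hz hm
  have key := h.mix_spref hx hy hmX h0 h1 (h.spref_of_pref_of_spref hx hz hmX hxz hzm)
    (h.spref_of_pref_of_spref hy hz hmX hyz hzm)
  exact key.2 key.1

theorem not_mix_spref_mix_of_spref (h : IsVNMPreference X R) (hx : x ∈ X) (hy : y ∈ X)
    (hz : z ∈ X) (h0 : 0 < α) (h1 : α < 1) (hxy : R x y) (hyx : R y x) (hzx : SPref R z x) :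
    ¬ SPref R (α • x + (1 - α) • z) (α • y + (1 - α) • z) := by
  intro hpq
  have hp := h.mix_mem hx hz h0.le h1.le
  have hq := h.mix_mem hy hz h0.le h1.le
  have hzp : SPref R z (α • x + (1 - α) • z) := by
    have key := h.indep z hz x hx z hz α h0 h1.le hzx
    rwa [← add_smul, add_sub_cancel, one_smul] at key
  obtain ⟨-, -, β, hβ, -, hmix⟩ := h.arch z hz _ hp _ hq hzp hpq
  have hw := h.mix_mem hz hy hβ.1.le hβ.2.le
  have hwx : SPref R (β • z + (1 - β) • y) x := by
    have hzy := h.spref_of_spref_of_pref hz hx hy hzx hxy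
    have key := h.indep z hz y hy y hy β hβ.1 hβ.2.le hzy
    rw [← add_smul, add_sub_cancel, one_smul] at key
    exact h.spref_of_spref_of_pref hw hy hx key hyx
  have key := h.indep _ hw x hx z hz α h0 h1.le hwx
  have heq : α • (β • z + (1 - β) • y) + (1 - α) • z
      = β • z + (1 - β) • (α • y + (1 - α) • z) := by module
  rw [heq] at key
  exact key.2 hmix.1

/-- Independence for the weak relation. -/
theorem mix_pref_mix_right (h : IsVNMPreference X R) (hx : x ∈ X) (hy : y ∈ X)
    (hz : z ∈ X) (h0 : 0 < α) (h1 : α < 1) (hxy : R x y) :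
    R (α • x + (1 - α) • z) (α • y + (1 - α) • z) := by
  by_contra hpq
  have hp := h.mix_mem hx hz h0.le h1.le
  have hq := h.mix_mem hy hz h0.le h1.le
  have hqp := h.spref_of_not hp hq hpq
  by_cases hyx : R y x
  · by_cases hyz : R y z
    · by_cases hzy : R z y
      · exact hpq <| h.trans _ hp y hy _ hq (h.mix_pref hx hz hy h0 h1 hxy hzy)
          (h.flip.mix_pref hy hz hy h0 h1 (h.refl y hy) hyz)
      · exact h.flip.not_mix_spref_mix_of_spref hx hy hz h0 h1 hyx hxy
          (h.spref_of_pref_of_spref hx hy hz hxy (h.spref_of_not hz hy hzy)) hqp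
    · exact h.not_mix_spref_mix_of_spref hy hx hz h0 h1 hyx hxy (h.spref_of_not hy hz hyz) hqp
  · exact hpq (h.indep x hx y hy z hz α h0 h1.le ⟨hxy, hyx⟩).1

theorem mix_pref_mix (h : IsVNMPreference X R) (hx : x ∈ X) (hy : y ∈ X) (hx' : x' ∈ X)
    (hy' : y' ∈ X) (h0 : 0 < α) (h1 : α < 1) (hxy : R x y) (hxy' : R x' y') :
    R (α • x + (1 - α) • x') (α • y + (1 - α) • y') := by
  have step := h.mix_pref_mix_right hx' hy' hy (α := 1 - α) (by linarith) (by linarith) hxy'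
  rw [sub_sub_cancel, add_comm, add_comm ((1 - α) • y')] at step
  exact h.trans _ (h.mix_mem hx hx' h0.le h1.le) _ (h.mix_mem hy hx' h0.le h1.le)
    _ (h.mix_mem hy hy' h0.le h1.le) (h.mix_pref_mix_right hx hy hx' h0 h1 hxy) step

/-- A strict preference over `y` survives small perturbations towards any `z`. -/
theorem exists_forall_mix_spref (h : IsVNMPreference X R) (hx : x ∈ X) (hy : y ∈ X) (hz : z ∈ X)
    (hxy : SPref R x y) :
    ∃ δ ∈ Set.Ioo (0 : ℝ) 1, ∀ α, δ ≤ α → α < 1 → SPref R (α • x + (1 - α) • z) y := by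
  by_cases hzy : R z y
  · refine ⟨1 / 2, by norm_num, fun α hα h1 => ?_⟩
    have h0 : 0 < α := by linarith
    exact h.spref_of_spref_of_pref (h.mix_mem hx hz h0.le h1.le) (h.mix_mem hy hz h0.le h1.le) hy
      (h.indep x hx y hy z hz α h0 h1.le hxy) (h.mix_pref hy hz hy h0 h1 (h.refl y hy) hzy)
  · obtain ⟨δ, hδ, -, -, hmix, -⟩ := h.arch x hx y hy z hz hxy (h.spref_of_not hz hy hzy)
    refine ⟨δ, hδ, fun α hα h1 => ?_⟩
    rcases hα.eq_or_lt with rfl | hα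
    · exact hmix
    have hd : 0 < 1 - δ := by linarith
    have key := h.mix_spref (α := (α - δ) / (1 - δ)) hx (h.mix_mem hx hz hδ.1.le hδ.2.le) hy
      (div_pos (by linarith) hd) ((div_lt_one hd).2 (by linarith)) hxy hmix
    convert key using 1
    match_scalars <;> field_simp <;> ring

theorem exists_mix_spref_mix (h : IsVNMPreference X R) (hx : x ∈ X) (hy : y ∈ X) (hx' : x' ∈ X)
    (hy' : y' ∈ X) (hxy : SPref R x y) :
    ∃ α ∈ Set.Ioo (0 : ℝ) 1, SPref R (α • x + (1 - α) • x') (α • y + (1 - α) • y') := by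
  have hm := h.mix_mem (α := 1 / 2) hx hy (by norm_num) (by norm_num)
  have hxm : SPref R x ((1 / 2 : ℝ) • x + (1 - 1 / 2 : ℝ) • y) := by
    have key := h.indep x hx y hy x hx (1 / 2) (by norm_num) (by norm_num) hxy
    convert key using 1 <;> module
  have hmy : SPref R ((1 / 2 : ℝ) • x + (1 - 1 / 2 : ℝ) • y) y := by
    have key := h.indep x hx y hy y hy (1 / 2) (by norm_num) (by norm_num) hxy
    convert key using 1; module
  obtain ⟨δ, hδ, H⟩ := h.exists_forall_mix_spref hx hm hx' hxm
  obtain ⟨ε, hε, K⟩ := h.flip.exists_forall_mix_spref hy hm hy' hmy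
  have h0 : 0 < max δ ε := lt_max_of_lt_left hδ.1
  have h1 : max δ ε < 1 := max_lt hδ.2 hε.2
  exact ⟨max δ ε, ⟨h0, h1⟩, h.spref_of_spref_of_pref (h.mix_mem hx hx' h0.le h1.le) hm
    (h.mix_mem hy hy' h0.le h1.le) (H _ (le_max_left _ _) h1) (K _ (le_max_right _ _) h1).1⟩

theorem smul_sub_add_smul_sub {s t : ℝ} (hst : s + t ≠ 0) (x y x' y' : V) :
    s • (x - y) + t • (x' - y') =
      (s + t) • (((s / (s + t)) • x + (1 - s / (s + t)) • x')
        - ((s / (s + t)) • y + (1 - s / (s + t)) • y')) := by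
  match_scalars <;> field_simp <;> ring

/-- The linear subspace spanned by the differences of elements of `X`. -/
def differenceSpace (h : IsVNMPreference X R) (hne : X.Nonempty) : Submodule ℝ V where
  carrier := {v | ∃ t : ℝ, 0 < t ∧ ∃ x ∈ X, ∃ y ∈ X, v = t • (x - y)}
  zero_mem' := by
    obtain ⟨x, hx⟩ := hne
    exact ⟨1, one_pos, x, hx, x, hx, by simp⟩
  add_mem' := by
    rintro _ _ ⟨s, hs, x, hx, y, hy, rfl⟩ ⟨t, ht, x', hx', y', hy', rfl⟩
    have h0 : 0 ≤ s / (s + t) := by positivity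
    have h1 : s / (s + t) ≤ 1 := (div_le_one (by positivity)).2 (by linarith)
    exact ⟨s + t, by positivity, _, h.mix_mem hx hx' h0 h1, _, h.mix_mem hy hy' h0 h1,
      smul_sub_add_smul_sub (by positivity) x y x' y'⟩
  smul_mem' := by
    rintro c _ ⟨t, ht, x, hx, y, hy, rfl⟩
    rcases lt_trichotomy c 0 with hc | rfl | hc
    · exact ⟨-c * t, mul_pos (neg_pos.2 hc) ht, y, hy, x, hx, by module⟩
    · exact ⟨1, one_pos, x, hx, x, hx, by simp⟩
    · exact ⟨c * t, mul_pos hc ht, x, hx, y, hy, by module⟩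

/-- The cone generated by the differences `x - y` with `x` weakly preferred to `y`. -/
def prefCone (h : IsVNMPreference X R) (hne : X.Nonempty) : PointedCone ℝ V where
  carrier := {v | ∃ t : ℝ, 0 < t ∧ ∃ x ∈ X, ∃ y ∈ X, R x y ∧ v = t • (x - y)}
  zero_mem' := by
    obtain ⟨x, hx⟩ := hne
    exact ⟨1, one_pos, x, hx, x, hx, h.refl x hx, by simp⟩
  add_mem' := by
    rintro _ _ ⟨s, hs, x, hx, y, hy, hxy, rfl⟩ ⟨t, ht, x', hx', y', hy', hxy', rfl⟩
    have h0 : 0 < s / (s + t) := by positivity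
    have h1 : s / (s + t) < 1 := (div_lt_one (by positivity)).2 (by linarith)
    exact ⟨s + t, by positivity, _, h.mix_mem hx hx' h0.le h1.le,
      _, h.mix_mem hy hy' h0.le h1.le, h.mix_pref_mix hx hy hx' hy' h0 h1 hxy hxy',
      smul_sub_add_smul_sub (by positivity) x y x' y'⟩
  smul_mem' := by
    rintro ⟨c, hc⟩ _ ⟨t, ht, x, hx, y, hy, hxy, rfl⟩
    rcases hc.eq_or_lt with rfl | hc
    · exact ⟨1, one_pos, x, hx, x, hx, h.refl x hx, by simp⟩
    · exact ⟨c * t, mul_pos hc ht, x, hx, y, hy, hxy, smul_smul c t (x - y)⟩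

theorem sub_mem_differenceSpace (h : IsVNMPreference X R) (hne : X.Nonempty)
    (hx : x ∈ X) (hy : y ∈ X) : x - y ∈ h.differenceSpace hne :=
  ⟨1, one_pos, x, hx, y, hy, (one_smul ℝ _).symm⟩

theorem sub_mem_prefCone (h : IsVNMPreference X R) (hne : X.Nonempty)
    (hx : x ∈ X) (hy : y ∈ X) (hxy : R x y) : x - y ∈ h.prefCone hne :=
  ⟨1, one_pos, x, hx, y, hy, hxy, (one_smul ℝ _).symm⟩

theorem nonneg_of_smul_sub_mem_prefCone (h : IsVNMPreference X R) (hne : X.Nonempty)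
    (hx : x ∈ X) (hy : y ∈ X) (hxy : SPref R x y) {c : ℝ}
    (hc : c • (x - y) ∈ h.prefCone hne) : 0 ≤ c := by
  by_contra! hneg
  obtain ⟨t, ht, x', hx', y', hy', hxy', heq⟩ := hc
  have hs : 0 < -c := neg_pos.2 hneg
  have hst : 0 < -c + t := by positivity
  have h0 : 0 < -c / (-c + t) := by positivity
  have h1 : -c / (-c + t) < 1 := (div_lt_one hst).2 (by linarith)
  have hsum := smul_sub_add_smul_sub hst.ne' x y x' y'
  rw [← heq, neg_smul, neg_add_cancel, eq_comm, smul_eq_zero_iff_right hst.ne', sub_eq_zero]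
    at hsum
  have step := h.indep x hx y hy x' hx' _ h0 h1.le hxy
  have step' := h.mix_pref_mix hy hy hx' hy' h0 h1 (h.refl y hy) hxy'
  rw [hsum] at step
  exact step.2 step'

theorem exists_smul_sub_add_mem_prefCone (h : IsVNMPreference X R) (hne : X.Nonempty)
    (hx : x ∈ X) (hy : y ∈ X) (hxy : SPref R x y) {v : V} (hv : v ∈ h.differenceSpace hne) :
    ∃ c : ℝ, c • (x - y) + v ∈ h.prefCone hne := by
  obtain ⟨t, ht, x', hx', y', hy', rfl⟩ := hv
  obtain ⟨α, ⟨h0, h1⟩, hα⟩ := h.exists_mix_spref_mix hx hy hx' hy' hxy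
  have hd : 0 < 1 - α := sub_pos.2 h1
  refine ⟨t * α / (1 - α), t / (1 - α), by positivity, _, h.mix_mem hx hx' h0.le h1.le,
    _, h.mix_mem hy hy' h0.le h1.le, hα.1, ?_⟩
  match_scalars <;> field_simp

/-- A linear functional, monotone for the preference and positive on one strict comparison,
is strictly monotone. -/
theorem lt_of_spref (h : IsVNMPreference X R) (g : V →ₗ[ℝ] ℝ)
    (hmono : ∀ x ∈ X, ∀ y ∈ X, R x y → g y ≤ g x) (hx' : x' ∈ X) (hy' : y' ∈ X)
    (hg : g y' < g x') (hx : x ∈ X) (hy : y ∈ X) (hxy : SPref R x y) : g y < g x := by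
  obtain ⟨α, ⟨h0, h1⟩, hα⟩ := h.exists_mix_spref_mix hx hy hy' hx' hxy
  have key := hmono _ (h.mix_mem hx hy' h0.le h1.le) _ (h.mix_mem hy hx' h0.le h1.le) hα.1
  simp only [map_add, map_smul, smul_eq_mul] at key
  nlinarith [mul_pos (sub_pos.2 h1) (sub_pos.2 hg)]

theorem exists_monotone_linearMap (h : IsVNMPreference X R) (hx : x ∈ X) (hy : y ∈ X)
    (hxy : SPref R x y) :
    ∃ g : V →ₗ[ℝ] ℝ, (∀ x ∈ X, ∀ y ∈ X, R x y → g y ≤ g x) ∧ g y < g x := by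
  have hne : X.Nonempty := ⟨x, hx⟩
  let W := h.differenceSpace hne
  let e : W := ⟨x - y, h.sub_mem_differenceSpace hne hx hy⟩
  have he : e ≠ 0 := by
    intro he
    have hxy' : x = y := sub_eq_zero.1 (congrArg Subtype.val he)
    exact hxy.2 (hxy' ▸ hxy.1)
  obtain ⟨g, hge, hg⟩ := riesz_extension ((h.prefCone hne).comap W.subtype)
    (LinearPMap.mkSpanSingleton e (1 : ℝ) he)
    (by
      rintro ⟨v, hv⟩ hvC
      obtain ⟨c, rfl⟩ := Submodule.mem_span_singleton.1 hv
      have hc : 0 ≤ c := h.nonneg_of_smul_sub_mem_prefCone hne hx hy hxy hvC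
      have hval : (LinearPMap.mkSpanSingleton e (1 : ℝ) he : W →ₗ.[ℝ] ℝ) ⟨c • e, hv⟩ = c := by
        refine (LinearPMap.mkSpanSingleton'_apply _ _ _ _ _).trans ?_
        simp
      rwa [hval])
    (by
      rintro ⟨v, hv⟩
      obtain ⟨c, hc⟩ := h.exists_smul_sub_add_mem_prefCone hne hx hy hxy hv
      exact ⟨⟨c • e, Submodule.mem_span_singleton.2 ⟨c, rfl⟩⟩, hc⟩)
  obtain ⟨G, hG⟩ := g.exists_extend
  have hGg (v : W) : G v = g v := LinearMap.congr_fun hG v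
  refine ⟨G, fun a ha b hb hab => ?_, ?_⟩
  · have hnonneg := hg ⟨a - b, h.sub_mem_differenceSpace hne ha hb⟩
      (h.sub_mem_prefCone hne ha hb hab)
    rw [← hGg, map_sub] at hnonneg
    linarith
  · have hone : g e = 1 := (hge ⟨e, Submodule.mem_span_singleton_self e⟩).trans
      (LinearPMap.mkSpanSingleton_apply ℝ ℝ he 1)
    rw [← hGg, map_sub] at hone
    linarith

/-- A preference is represented by a linear functional on the ambient space. -/
theorem exists_linearMap_representation (h : IsVNMPreference X R) :
    ∃ g : V →ₗ[ℝ] ℝ, ∀ x ∈ X, ∀ y ∈ X, (R x y ↔ g y ≤ g x) := by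
  by_cases hs : ∃ a ∈ X, ∃ b ∈ X, SPref R a b
  · obtain ⟨a, ha, b, hb, hab⟩ := hs
    obtain ⟨g, hmono, hg⟩ := h.exists_monotone_linearMap ha hb hab
    refine ⟨g, fun x hx y hy => ⟨hmono x hx y hy, fun hle => ?_⟩⟩
    by_contra hxy
    exact hle.not_gt (h.lt_of_spref g hmono ha hb hg hy hx (h.spref_of_not hx hy hxy))
  · refine ⟨0, fun x hx y hy => ⟨fun _ => le_rfl, fun _ => ?_⟩⟩
    by_contra hxy
    exact hs ⟨y, hy, x, hx, h.spref_of_not hx hy hxy⟩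

end IsVNMPreference

/-- von Neumann–Morgenstern (existence part): a total preorder on a convex set
satisfying independence and the Archimedean axiom admits an affine utility
representation. -/
theorem vonNeumann_morgenstern_affine_representation
    {V : Type*} [AddCommGroup V] [Module ℝ V] (X : Set V) (hX : Convex ℝ X)
    (R : V → V → Prop)
    (hrefl : ∀ x ∈ X, R x x)
    (htrans : ∀ x ∈ X, ∀ y ∈ X, ∀ z ∈ X, R x y → R y z → R x z)
    (htotal : ∀ x ∈ X, ∀ y ∈ X, R x y ∨ R y x)
    (hind : ∀ x ∈ X, ∀ y ∈ X, ∀ z ∈ X, ∀ α : ℝ, 0 < α → α ≤ 1 →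
      SPref R x y → SPref R (α • x + (1 - α) • z) (α • y + (1 - α) • z))
    (harch : ∀ x ∈ X, ∀ y ∈ X, ∀ z ∈ X, SPref R x y → SPref R y z →
      ∃ α ∈ Set.Ioo (0:ℝ) 1, ∃ β ∈ Set.Ioo (0:ℝ) 1,
        SPref R (α • x + (1 - α) • z) y ∧ SPref R y (β • x + (1 - β) • z)) :
    ∃ u : V → ℝ,
      (∀ x ∈ X, ∀ y ∈ X, ∀ α ∈ Set.Icc (0:ℝ) 1,
        u (α • x + (1 - α) • y) = α * u x + (1 - α) * u y) ∧
      (∀ x ∈ X, ∀ y ∈ X, (R x y ↔ u y ≤ u x)) := by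
  have h : IsVNMPreference X R := ⟨hX, hrefl, htrans, htotal, hind, harch⟩
  obtain ⟨g, hg⟩ := h.exists_linearMap_representation
  exact ⟨g, fun x _ y _ α _ => by simp, hg⟩
end

section
/- Let P(ℝ) be the set of Borel probability measures on ℝ equipped with the topology of weak convergence (the topology of convergence of integrals of bounded continuous functions), and let ≽ be a total preorder on P(ℝ) satisfying the independence axiom and the Archimedean axiom (with respect to convex combinations of measures) which is continuous for the weak topology (all upper and lower contour sets are closed). Then there exists a bounded continuous function u : ℝ → ℝ such that for all μ, ν ∈ P(ℝ): μ ≽ ν if and only if ∫ u dμ ≥ ∫ u dν; moreover u is unique up to transformations u ↦ a·u + b with a > 0 and b ∈ ℝ. (Classical case of the paper's conditional von Neumann–Morgenstern representation theorem.) -/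
open MeasureTheory


/-- The convex combination `α μ + (1-α) ν` of two Borel probability measures on ℝ,
as a measure. -/
noncomputable def mixMeasure (α : ℝ) (μ ν : ProbabilityMeasure ℝ) : Measure ℝ :=
  ENNReal.ofReal α • (μ : Measure ℝ) + ENNReal.ofReal (1 - α) • (ν : Measure ℝ)

open Filter Topology Set

namespace VonNeumannMorgenstern

/-- The mixture `α μ + (1 - α) ν` as a probability measure, with the weight `α` truncated to
`[0, 1]`. -/
noncomputable def mix (α : ℝ) (μ ν : ProbabilityMeasure ℝ) : ProbabilityMeasure ℝ :=
  ⟨mixMeasure (max 0 (min 1 α)) μ ν, ⟨by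
    have h₀ : (0 : ℝ) ≤ max 0 (min 1 α) := le_max_left _ _
    have h₁ : max 0 (min 1 α) ≤ (1 : ℝ) := max_le zero_le_one (min_le_left _ _)
    simp only [mixMeasure, Measure.add_apply, Measure.smul_apply, measure_univ, smul_eq_mul,
      mul_one]
    rw [← ENNReal.ofReal_add h₀ (by linarith)]
    simp⟩⟩

lemma clamp_eq {α : ℝ} (hα : α ∈ Icc (0 : ℝ) 1) : max 0 (min 1 α) = α := by
  rw [min_eq_right hα.2, max_eq_right hα.1]

lemma toMeasure_mix {α : ℝ} (hα : α ∈ Icc (0 : ℝ) 1) (μ ν : ProbabilityMeasure ℝ) :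
    (mix α μ ν : Measure ℝ) = mixMeasure α μ ν := by
  change mixMeasure (max 0 (min 1 α)) μ ν = _
  rw [clamp_eq hα]

lemma real_mix {α : ℝ} (hα : α ∈ Icc (0 : ℝ) 1) (μ ν : ProbabilityMeasure ℝ) (A : Set ℝ) :
    (mix α μ ν : Measure ℝ).real A =
      α * (μ : Measure ℝ).real A + (1 - α) * (ν : Measure ℝ).real A := by
  rw [toMeasure_mix hα, mixMeasure, measureReal_add_apply
    (ENNReal.mul_ne_top ENNReal.ofReal_ne_top (measure_ne_top _ _))
    (ENNReal.mul_ne_top ENNReal.ofReal_ne_top (measure_ne_top _ _)),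
    measureReal_ennreal_smul_apply, measureReal_ennreal_smul_apply,
    ENNReal.toReal_ofReal hα.1, ENNReal.toReal_ofReal (sub_nonneg.2 hα.2)]

lemma ext_real {μ ν : ProbabilityMeasure ℝ}
    (h : ∀ A, (μ : Measure ℝ).real A = (ν : Measure ℝ).real A) : μ = ν := by
  refine ProbabilityMeasure.eq_of_forall_toMeasure_apply_eq _ _ fun A _ ↦ ?_
  exact (measureReal_eq_measureReal_iff (by finiteness) (by finiteness)).1 (h A)

lemma integral_mix_clamp (α : ℝ) (μ ν : ProbabilityMeasure ℝ) {f : ℝ → ℝ}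
    (hμ : Integrable f (μ : Measure ℝ)) (hν : Integrable f (ν : Measure ℝ)) :
    ∫ t, f t ∂(mix α μ ν : Measure ℝ) =
      max 0 (min 1 α) * ∫ t, f t ∂(μ : Measure ℝ) +
        (1 - max 0 (min 1 α)) * ∫ t, f t ∂(ν : Measure ℝ) := by
  have h₁ : max 0 (min 1 α) ≤ (1 : ℝ) := max_le zero_le_one (min_le_left _ _)
  change ∫ t, f t ∂(mixMeasure (max 0 (min 1 α)) μ ν) = _
  rw [mixMeasure, integral_add_measure (hμ.smul_measure ENNReal.ofReal_ne_top)
    (hν.smul_measure ENNReal.ofReal_ne_top), integral_smul_measure, integral_smul_measure,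
    ENNReal.toReal_ofReal (le_max_left _ _), ENNReal.toReal_ofReal (sub_nonneg.2 h₁)]
  rfl

lemma integral_mix {α : ℝ} (hα : α ∈ Icc (0 : ℝ) 1) (μ ν : ProbabilityMeasure ℝ) {f : ℝ → ℝ}
    (hμ : Integrable f (μ : Measure ℝ)) (hν : Integrable f (ν : Measure ℝ)) :
    ∫ t, f t ∂(mix α μ ν : Measure ℝ) =
      α * ∫ t, f t ∂(μ : Measure ℝ) + (1 - α) * ∫ t, f t ∂(ν : Measure ℝ) := by
  rw [integral_mix_clamp α μ ν hμ hν, clamp_eq hα]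

lemma continuous_mix (μ ν : ProbabilityMeasure ℝ) : Continuous fun α ↦ mix α μ ν := by
  refine continuous_iff_continuousAt.2 fun α ↦
    ProbabilityMeasure.tendsto_iff_forall_integral_tendsto.2 fun f ↦ ?_
  simp only [integral_mix_clamp _ _ _ (f.integrable _) (f.integrable _)]
  exact Continuous.tendsto (by fun_prop) α

lemma one_sub_mem {α : ℝ} (hα : α ∈ Icc (0 : ℝ) 1) : 1 - α ∈ Icc (0 : ℝ) 1 :=
  ⟨by linarith [hα.2], by linarith [hα.1]⟩

lemma convex_mem {s α β : ℝ} (hs : s ∈ Icc (0 : ℝ) 1) (hα : α ∈ Icc (0 : ℝ) 1)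
    (hβ : β ∈ Icc (0 : ℝ) 1) : s * α + (1 - s) * β ∈ Icc (0 : ℝ) 1 := by
  simpa using convex_Icc (0 : ℝ) 1 hα hβ hs.1 (sub_nonneg.2 hs.2) (by ring)

lemma mix_zero (μ ν : ProbabilityMeasure ℝ) : mix 0 μ ν = ν :=
  ext_real fun A ↦ by rw [real_mix (by simp)]; ring

lemma mix_one (μ ν : ProbabilityMeasure ℝ) : mix 1 μ ν = μ :=
  ext_real fun A ↦ by rw [real_mix (by simp)]; ring

lemma mix_self {α : ℝ} (hα : α ∈ Icc (0 : ℝ) 1) (μ : ProbabilityMeasure ℝ) : mix α μ μ = μ :=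
  ext_real fun A ↦ by rw [real_mix hα]; ring

lemma mix_comm {α : ℝ} (hα : α ∈ Icc (0 : ℝ) 1) (μ ν : ProbabilityMeasure ℝ) :
    mix α μ ν = mix (1 - α) ν μ :=
  ext_real fun A ↦ by rw [real_mix hα, real_mix (one_sub_mem hα)]; ring

lemma mix_mix_same {s α β : ℝ} (hs : s ∈ Icc (0 : ℝ) 1) (hα : α ∈ Icc (0 : ℝ) 1)
    (hβ : β ∈ Icc (0 : ℝ) 1) (μ ν : ProbabilityMeasure ℝ) :
    mix s (mix α μ ν) (mix β μ ν) = mix (s * α + (1 - s) * β) μ ν :=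
  ext_real fun A ↦ by
    rw [real_mix hs, real_mix hα, real_mix hβ, real_mix (convex_mem hs hα hβ)]; ring

lemma mix_mix_right {s α : ℝ} (hs : s ∈ Icc (0 : ℝ) 1) (hα : α ∈ Icc (0 : ℝ) 1)
    (μ ν : ProbabilityMeasure ℝ) : mix s (mix α μ ν) ν = mix (s * α) μ ν := by
  have h := mix_mix_same hs hα (β := 0) (by simp) μ ν
  rwa [mix_zero, mul_zero, add_zero] at h

lemma mix_mix_distrib {s α : ℝ} (hs : s ∈ Icc (0 : ℝ) 1) (hα : α ∈ Icc (0 : ℝ) 1)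
    (μ ν η : ProbabilityMeasure ℝ) :
    mix s (mix α μ ν) η = mix α (mix s μ η) (mix s ν η) :=
  ext_real fun A ↦ by
    rw [real_mix hs, real_mix hα, real_mix hα, real_mix hs, real_mix hs]; ring

/-- A function on probability measures that respects mixtures. -/
def IsAffine (U : ProbabilityMeasure ℝ → ℝ) : Prop :=
  ∀ c ∈ Icc (0 : ℝ) 1, ∀ μ ν, U (mix c μ ν) = c * U μ + (1 - c) * U ν

/-- A weakly continuous total preorder on probability measures satisfying independence. -/
structure IsContinuousIndependent (R : ProbabilityMeasure ℝ → ProbabilityMeasure ℝ → Prop) :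
    Prop where
  trans : ∀ {μ ν η}, R μ ν → R ν η → R μ η
  total : ∀ μ ν, R μ ν ∨ R ν μ
  strict_mix : ∀ {μ ν} (η) {α : ℝ}, 0 < α → α ≤ 1 → SPref R μ ν →
    SPref R (mix α μ η) (mix α ν η)
  isClosed_ge : ∀ μ, IsClosed {ν | R ν μ}
  isClosed_le : ∀ μ, IsClosed {ν | R μ ν}

namespace IsContinuousIndependent

variable {R : ProbabilityMeasure ℝ → ProbabilityMeasure ℝ → Prop}
  {x y z w : ProbabilityMeasure ℝ}

lemma refl (h : IsContinuousIndependent R) (μ : ProbabilityMeasure ℝ) : R μ μ :=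
  (h.total μ μ).elim id id

lemma strict_of_not (h : IsContinuousIndependent R) (hR : ¬ R x y) : SPref R y x :=
  ⟨(h.total x y).resolve_left hR, hR⟩

lemma mix_le_mix (h : IsContinuousIndependent R) (η : ProbabilityMeasure ℝ) {α : ℝ}
    (hα : α ∈ Icc (0 : ℝ) 1) (hzw : R z w) : R (mix α z η) (mix α w η) := by
  rcases hα.1.eq_or_lt with rfl | h₀
  · simpa only [mix_zero] using h.refl η
  by_cases hwz : R w z
  swap
  · exact (h.strict_mix η h₀ hα.2 ⟨hzw, hwz⟩).1
  by_cases hx : ∃ x, SPref R x z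
  · obtain ⟨x, hx⟩ := hx
    have hcont : Continuous fun ε : ℝ ↦ mix ε (mix α x η) (mix α z η) := continuous_mix _ _
    have hev : ∀ᶠ ε : ℝ in 𝓝[>] 0, R (mix ε (mix α x η) (mix α z η)) (mix α w η) := by
      filter_upwards [Ioo_mem_nhdsGT (zero_lt_one' ℝ)] with ε hε
      have hε' : ε ∈ Icc (0 : ℝ) 1 := ⟨hε.1.le, hε.2.le⟩
      have h₁ := h.strict_mix z hε.1 hε.2.le hx
      rw [mix_self hε'] at h₁
      rw [← mix_mix_distrib hα hε']
      exact (h.strict_mix η h₀ hα.2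
        ⟨h.trans h₁.1 hzw, fun h' ↦ h₁.2 (h.trans hzw h')⟩).1
    have hlim := (h.isClosed_ge (mix α w η)).mem_of_tendsto
      ((hcont.tendsto 0).mono_left nhdsWithin_le_nhds) hev
    simpa only [mix_zero, mem_ofPred_eq] using hlim
  by_cases hy : ∃ y, SPref R w y
  · obtain ⟨y, hy⟩ := hy
    have hcont : Continuous fun ε : ℝ ↦ mix ε (mix α y η) (mix α w η) := continuous_mix _ _
    have hev : ∀ᶠ ε : ℝ in 𝓝[>] 0, R (mix α z η) (mix ε (mix α y η) (mix α w η)) := by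
      filter_upwards [Ioo_mem_nhdsGT (zero_lt_one' ℝ)] with ε hε
      have hε' : ε ∈ Icc (0 : ℝ) 1 := ⟨hε.1.le, hε.2.le⟩
      have h₁ := h.strict_mix w hε.1 hε.2.le hy
      rw [mix_self hε'] at h₁
      rw [← mix_mix_distrib hα hε']
      exact (h.strict_mix η h₀ hα.2
        ⟨h.trans hzw h₁.1, fun h' ↦ h₁.2 (h.trans h' hzw)⟩).1
    have hlim := (h.isClosed_le (mix α z η)).mem_of_tendsto
      ((hcont.tendsto 0).mono_left nhdsWithin_le_nhds) hev
    simpa only [mix_zero, mem_ofPred_eq] using hlim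
  · have hz : ∀ v, R z v := fun v ↦ by
      by_contra hv
      exact hx ⟨v, h.strict_of_not hv⟩
    have hw : ∀ v, R v w := fun v ↦ by
      by_contra hv
      exact hy ⟨v, h.strict_of_not hv⟩
    exact h.trans (h.trans (hw _) hwz) (hz _)

lemma mix_le_mix_both (h : IsContinuousIndependent R) {z' w' : ProbabilityMeasure ℝ} {α : ℝ}
    (hα : α ∈ Icc (0 : ℝ) 1) (hzw : R z w) (hzw' : R z' w') : R (mix α z z') (mix α w w') := by
  refine h.trans (h.mix_le_mix z' hα hzw) ?_
  rw [mix_comm hα, mix_comm hα w]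
  exact h.mix_le_mix w (one_sub_mem hα) hzw'

lemma mix_le_mix_iff (h : IsContinuousIndependent R) (η : ProbabilityMeasure ℝ) {α : ℝ}
    (h₀ : 0 < α) (h₁ : α ≤ 1) : R (mix α z η) (mix α w η) ↔ R z w := by
  refine ⟨fun hR ↦ ?_, h.mix_le_mix η ⟨h₀.le, h₁⟩⟩
  by_contra hzw
  exact (h.strict_mix η h₀ h₁ (h.strict_of_not hzw)).2 hR

lemma strict_mix_of_lt (h : IsContinuousIndependent R) (hxy : SPref R x y) {α β : ℝ}
    (hα : α ∈ Icc (0 : ℝ) 1) (hβ : β ∈ Icc (0 : ℝ) 1) (hαβ : α < β) :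
    SPref R (mix β x y) (mix α x y) := by
  have hs : β - α ∈ Icc (0 : ℝ) 1 := ⟨by linarith, by linarith [hα.1, hβ.2]⟩
  have hle : 0 ≤ 1 - (β - α) := sub_nonneg.2 hs.2
  have hM : α / (1 - (β - α)) ∈ Icc (0 : ℝ) 1 :=
    ⟨div_nonneg hα.1 hle, div_le_one_of_le₀ (by linarith [hβ.2]) hle⟩
  have hmul : (1 - (β - α)) * (α / (1 - (β - α))) = α := by
    rcases hle.eq_or_lt with h0 | h0
    · rw [← h0]; linarith [hα.1, hβ.2]
    · field_simp
  have hstrict := h.strict_mix (mix (α / (1 - (β - α))) x y) (sub_pos.2 hαβ) hs.2 hxy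
  have hx := mix_mix_same hs (α := 1) (by simp) hM x y
  have hy := mix_mix_same hs (α := 0) (by simp) hM x y
  rw [mix_one, hmul] at hx
  rw [mix_zero, hmul] at hy
  rw [hx, hy] at hstrict
  convert hstrict using 2 <;> ring

lemma mix_le_iff (h : IsContinuousIndependent R) (hxy : SPref R x y) {α β : ℝ}
    (hα : α ∈ Icc (0 : ℝ) 1) (hβ : β ∈ Icc (0 : ℝ) 1) :
    R (mix α x y) (mix β x y) ↔ β ≤ α := by
  rcases lt_trichotomy α β with hlt | rfl | hlt
  · exact iff_of_false (h.strict_mix_of_lt hxy hα hβ hlt).2 hlt.not_ge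
  · exact iff_of_true (h.refl _) le_rfl
  · exact iff_of_true (h.strict_mix_of_lt hxy hβ hα hlt).1 hlt.le

lemma exists_indifferent_mix (h : IsContinuousIndependent R) (hxz : R x z) (hzy : R z y) :
    ∃ α ∈ Icc (0 : ℝ) 1, R (mix α x y) z ∧ R z (mix α x y) := by
  have hpre := isPreconnected_closed_iff.1 (isPreconnected_Icc (a := (0 : ℝ)) (b := 1))
    _ _ ((h.isClosed_ge z).preimage (continuous_mix x y))
    ((h.isClosed_le z).preimage (continuous_mix x y))
    (fun α _ ↦ h.total _ _) ⟨1, by simp, by simpa [mix_one] using hxz⟩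
    ⟨0, by simp, by simpa [mix_zero] using hzy⟩
  obtain ⟨α, hα, h₁, h₂⟩ := hpre
  exact ⟨α, hα, h₁, h₂⟩

/-- `r` is the utility of `z` normalised by utility `1` at `x` and `0` at `y`, witnessed by
contracting `z` with ratio `t` towards the midpoint of `x` and `y`. -/
def IsUtility (R : ProbabilityMeasure ℝ → ProbabilityMeasure ℝ → Prop)
    (x y z : ProbabilityMeasure ℝ) (r t : ℝ) : Prop :=
  0 < t ∧ t ≤ 1 ∧ t * r + (1 - t) * (1 / 2) ∈ Icc (0 : ℝ) 1 ∧
    R (mix t z (mix (1 / 2) x y)) (mix (t * r + (1 - t) * (1 / 2)) x y) ∧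
    R (mix (t * r + (1 - t) * (1 / 2)) x y) (mix t z (mix (1 / 2) x y))

lemma half_mem : (1 / 2 : ℝ) ∈ Icc (0 : ℝ) 1 := by norm_num

lemma exists_isUtility (h : IsContinuousIndependent R) (hxy : SPref R x y)
    (z : ProbabilityMeasure ℝ) : ∃ r t, IsUtility R x y z r t := by
  have h₁ := h.strict_mix_of_lt hxy half_mem (β := 1) (by simp) (by norm_num)
  have h₂ := h.strict_mix_of_lt hxy (α := 0) (by simp) half_mem (by norm_num)
  rw [mix_one] at h₁
  rw [mix_zero] at h₂
  have hc := (continuous_mix z (mix (1 / 2) x y)).tendsto 0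
  rw [mix_zero] at hc
  have e₁ := hc.eventually ((h.isClosed_ge x).isOpen_compl.eventually_mem h₁.2)
  have e₂ := hc.eventually ((h.isClosed_le y).isOpen_compl.eventually_mem h₂.2)
  obtain ⟨t, ⟨ht₁, ht₂⟩, ht⟩ := (((e₁.and e₂).filter_mono nhdsWithin_le_nhds).and
    (Ioo_mem_nhdsGT (zero_lt_one' ℝ))).exists
  obtain ⟨α, hα, ha, hb⟩ := h.exists_indifferent_mix (h.strict_of_not ht₁).1
    (h.strict_of_not ht₂).1
  have hr : t * ((α - (1 - t) * (1 / 2)) / t) + (1 - t) * (1 / 2) = α := by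
    have := ht.1.ne'
    field_simp
    ring
  refine ⟨(α - (1 - t) * (1 / 2)) / t, t, ht.1, ht.2.le, ?_⟩
  rw [hr]
  exact ⟨hα, hb, ha⟩

lemma IsUtility.of_le (h : IsContinuousIndependent R) {r t s : ℝ} (hz : IsUtility R x y z r t)
    (hs : 0 < s) (hst : s ≤ t) : IsUtility R x y z r s := by
  obtain ⟨ht₀, ht₁, hmem, ha, hb⟩ := hz
  have hq : s / t ∈ Icc (0 : ℝ) 1 := ⟨(div_pos hs ht₀).le, div_le_one_of_le₀ hst ht₀.le⟩
  have hmul : s / t * t = s := div_mul_cancel₀ _ ht₀.ne'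
  have heq : s / t * (t * r + (1 - t) * (1 / 2)) + (1 - s / t) * (1 / 2) =
      s * r + (1 - s) * (1 / 2) := by
    linear_combination (r - 1 / 2) * hmul
  have hm := convex_mem hq hmem half_mem
  rw [heq] at hm
  have h₁ := h.mix_le_mix (mix (1 / 2) x y) hq ha
  have h₂ := h.mix_le_mix (mix (1 / 2) x y) hq hb
  rw [mix_mix_right hq ⟨ht₀.le, ht₁⟩, mix_mix_same hq hmem half_mem, hmul, heq] at h₁ h₂
  exact ⟨hs, hst.trans ht₁, hm, h₁, h₂⟩

lemma IsUtility.le_iff (h : IsContinuousIndependent R) (hxy : SPref R x y) {r q t s : ℝ}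
    (hz : IsUtility R x y z r t) (hw : IsUtility R x y w q s) : R z w ↔ q ≤ r := by
  have hmin : 0 < min t s := lt_min hz.1 hw.1
  obtain ⟨h₀, h₁, hm, ha, hb⟩ := hz.of_le h hmin (min_le_left _ _)
  obtain ⟨-, -, hm', ha', hb'⟩ := hw.of_le h hmin (min_le_right _ _)
  rw [← h.mix_le_mix_iff (mix (1 / 2) x y) h₀ h₁,
    show q ≤ r ↔ min t s * q + (1 - min t s) * (1 / 2) ≤ min t s * r + (1 - min t s) * (1 / 2) by
      rw [add_le_add_iff_right, mul_le_mul_iff_right₀ h₀],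
    ← h.mix_le_iff hxy hm hm']
  exact ⟨fun hR ↦ h.trans hb (h.trans hR ha'), fun hR ↦ h.trans ha (h.trans hR hb')⟩

lemma IsUtility.mix (h : IsContinuousIndependent R) {r q t s c : ℝ}
    (hz : IsUtility R x y z r t) (hw : IsUtility R x y w q s) (hc : c ∈ Icc (0 : ℝ) 1) :
    IsUtility R x y (mix c z w) (c * r + (1 - c) * q) (min t s) := by
  have hmin : 0 < min t s := lt_min hz.1 hw.1
  obtain ⟨h₀, h₁, hm, ha, hb⟩ := hz.of_le h hmin (min_le_left _ _)
  obtain ⟨-, -, hm', ha', hb'⟩ := hw.of_le h hmin (min_le_right _ _)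
  generalize min t s = t at *
  have heq : c * (t * r + (1 - t) * (1 / 2)) + (1 - c) * (t * q + (1 - t) * (1 / 2)) =
      t * (c * r + (1 - c) * q) + (1 - t) * (1 / 2) := by ring
  have hmem := convex_mem hc hm hm'
  have hR := h.mix_le_mix_both hc ha ha'
  have hR' := h.mix_le_mix_both hc hb hb'
  rw [← mix_mix_distrib ⟨h₀.le, h₁⟩ hc, mix_mix_same hc hm hm', heq] at hR hR'
  rw [heq] at hmem
  exact ⟨h₀, h₁, hmem, hR, hR'⟩

/-- The mixture-space theorem: the preference has an affine representation. -/
theorem exists_affine_representation (h : IsContinuousIndependent R) :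
    ∃ U : ProbabilityMeasure ℝ → ℝ, (∀ μ ν, R μ ν ↔ U ν ≤ U μ) ∧ IsAffine U := by
  by_cases hxy : ∃ x y, SPref R x y
  · obtain ⟨x, y, hxy⟩ := hxy
    choose U t hU using h.exists_isUtility hxy
    refine ⟨U, fun μ ν ↦ (hU μ).le_iff h hxy (hU ν), fun c hc μ ν ↦ ?_⟩
    have hmix := (hU μ).mix h (hU ν) hc
    exact le_antisymm ((hmix.le_iff h hxy (hU _)).1 (h.refl _))
      (((hU _).le_iff h hxy hmix).1 (h.refl _))
  · refine ⟨fun _ ↦ 0, fun μ ν ↦ iff_of_true ?_ le_rfl, by simp [IsAffine]⟩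
    by_contra hR
    exact hxy ⟨ν, μ, h.strict_of_not hR⟩

end IsContinuousIndependent

lemma IsAffine.ordConnected_range {U : ProbabilityMeasure ℝ → ℝ} (hU : IsAffine U) :
    OrdConnected (range U) := by
  refine Convex.ordConnected ?_
  rintro _ ⟨μ, rfl⟩ _ ⟨ν, rfl⟩ a b ha hb hab
  obtain rfl : b = 1 - a := by linarith
  exact ⟨mix a μ ν, by simpa using hU a ⟨ha, by linarith⟩ μ ν⟩

lemma IsAffine.continuous {U : ProbabilityMeasure ℝ → ℝ} (hU : IsAffine U)
    (hge : ∀ μ, IsClosed {ν | U μ ≤ U ν}) (hle : ∀ μ, IsClosed {ν | U ν ≤ U μ}) :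
    Continuous U := by
  have key : ∀ c, c ∈ range U ∨ (∀ μ, U μ < c) ∨ ∀ μ, c < U μ := by
    intro c
    by_contra! hcon
    obtain ⟨hc, ⟨μ, hμ⟩, ν, hν⟩ := hcon
    exact hc (hU.ordConnected_range.out ⟨ν, rfl⟩ ⟨μ, rfl⟩ ⟨hν, hμ⟩)
  rw [continuous_iff_lower_upperSemicontinuous, lowerSemicontinuous_iff_isClosed_preimage,
    upperSemicontinuous_iff_isClosed_preimage]
  refine ⟨fun c ↦ ?_, fun c ↦ ?_⟩
  · rcases key c with ⟨μ, rfl⟩ | hc | hc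
    · exact hle μ
    · simp [preimage, (hc _).le]
    · simp [preimage, (hc _).not_ge]
  · rcases key c with ⟨μ, rfl⟩ | hc | hc
    · exact hge μ
    · simp [preimage, (hc _).not_ge]
    · simp [preimage, (hc _).le]

lemma integral_diracProba (f : ℝ → ℝ) (a : ℝ) :
    ∫ t, f t ∂(diracProba a : Measure ℝ) = f a := by
  simp [diracProba]

lemma integrable_of_bounded {f : ℝ → ℝ} (hf : Continuous f) {C : ℝ} (hC : ∀ t, |f t| ≤ C)
    (μ : ProbabilityMeasure ℝ) : Integrable f (μ : Measure ℝ) :=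
  Integrable.of_bound hf.aestronglyMeasurable C (.of_forall hC)

lemma IsAffine.bounded_dirac {U : ProbabilityMeasure ℝ → ℝ} (hU : IsAffine U)
    (hc : Continuous U) : ∃ C : ℝ, ∀ t : ℝ, |U (diracProba t)| ≤ C := by
  by_contra! hcon
  choose t ht using fun n : ℕ ↦ hcon (n + 1 + |U (diracProba 0)|)
  have hw : ∀ n : ℕ, (1 / ((n : ℝ) + 1)) ∈ Icc (0 : ℝ) 1 := fun n ↦
    ⟨by positivity, div_le_one_of_le₀ (by simp) (by positivity)⟩
  have hlim : Tendsto (fun n : ℕ ↦ mix (1 / ((n : ℝ) + 1)) (diracProba (t n)) (diracProba 0))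
      atTop (𝓝 (diracProba 0)) := by
    refine ProbabilityMeasure.tendsto_iff_forall_integral_tendsto.2 fun f ↦ ?_
    have hzero := (tendsto_one_div_add_atTop_nhds_zero_nat (𝕜 := ℝ)).zero_mul_isBoundedUnder_le
      (g := fun n ↦ f (t n) - f 0) ⟨‖f‖ + ‖f‖, by
        simp only [eventually_map]
        exact .of_forall fun n ↦ (norm_sub_le _ _).trans
          (add_le_add (f.norm_coe_le_norm _) (f.norm_coe_le_norm _))⟩
    have hadd := hzero.add_const (f 0)
    rw [zero_add] at hadd
    rw [integral_diracProba]
    refine hadd.congr fun n ↦ ?_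
    rw [integral_mix (hw n) _ _ (f.integrable _) (f.integrable _), integral_diracProba,
      integral_diracProba]
    ring
  have hUlim := (hc.tendsto _).comp hlim
  obtain ⟨n, hn⟩ := (Metric.tendsto_nhds.1 hUlim 1 one_pos).exists
  rw [Function.comp_apply, hU _ (hw n), Real.dist_eq,
    show 1 / ((n : ℝ) + 1) * U (diracProba (t n)) + (1 - 1 / ((n : ℝ) + 1)) * U (diracProba 0) -
      U (diracProba 0) = (U (diracProba (t n)) - U (diracProba 0)) / ((n : ℝ) + 1) by ring,
    abs_div, abs_of_pos (a := (n : ℝ) + 1) (by positivity), div_lt_one (by positivity)] at hn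
  linarith [ht n, abs_sub_abs_le_abs_sub (U (diracProba (t n))) (U (diracProba 0))]

/-- The finitely supported case of the integral representation. -/
lemma IsAffine.eq_integral_of_finset {U : ProbabilityMeasure ℝ → ℝ} (hU : IsAffine U)
    (hint : ∀ μ : ProbabilityMeasure ℝ, Integrable (fun t ↦ U (diracProba t)) (μ : Measure ℝ))
    (s : Finset ℝ) : ∀ μ : ProbabilityMeasure ℝ, (μ : Measure ℝ) (s : Set ℝ)ᶜ = 0 →
      U μ = ∫ t, U (diracProba t) ∂(μ : Measure ℝ) := by
  induction s using Finset.induction_on with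
  | empty => intro μ hμ; simp at hμ
  | insert a s _ ih =>
    intro μ hμ
    have hma : MeasurableSet ({a}ᶜ : Set ℝ) := (measurableSet_singleton a).compl
    by_cases h0 : (μ : Measure ℝ) {a}ᶜ = 0
    · have hμa : μ = diracProba a := by
        refine ProbabilityMeasure.toMeasure_injective ?_
        have hae : ∀ᵐ t ∂(μ : Measure ℝ), id t = a := by
          rw [ae_iff]; exact h0
        have hmap := Measure.map_congr (mβ := Real.measurableSpace) (g := fun _ ↦ a) hae
        simpa [diracProba] using hmap
      rw [hμa, integral_diracProba fun t ↦ U (diracProba t)]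
    · have hprob := ProbabilityTheory.cond_isProbabilityMeasure (μ := (μ : Measure ℝ)) h0
      set ν : ProbabilityMeasure ℝ := ⟨ProbabilityTheory.cond (μ : Measure ℝ) {a}ᶜ, hprob⟩
      have hc : (μ : Measure ℝ).real {a} ∈ Icc (0 : ℝ) 1 := ⟨measureReal_nonneg, measureReal_le_one⟩
      have hνs : (ν : Measure ℝ) (s : Set ℝ)ᶜ = 0 := by
        change ProbabilityTheory.cond (μ : Measure ℝ) {a}ᶜ (s : Set ℝ)ᶜ = 0
        rw [ProbabilityTheory.cond_apply hma, ← compl_union, ← insert_eq, ← Finset.coe_insert, hμ,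
          mul_zero]
      have hmix : μ = mix ((μ : Measure ℝ).real {a}) (diracProba a) ν := by
        refine ext_real fun A ↦ ?_
        have hne : 1 - (μ : Measure ℝ).real {a} ≠ 0 := by
          rwa [← probReal_compl_eq_one_sub (measurableSet_singleton a), measureReal_ne_zero_iff]
        have hνA : (ν : Measure ℝ).real A =
            (1 - (μ : Measure ℝ).real {a})⁻¹ * (μ : Measure ℝ).real ({a}ᶜ ∩ A) := by
          rw [← probReal_compl_eq_one_sub (measurableSet_singleton a)]
          change (ProbabilityTheory.cond (μ : Measure ℝ) {a}ᶜ).real A = _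
          rw [measureReal_def, ProbabilityTheory.cond_apply hma, ENNReal.toReal_mul,
            ENNReal.toReal_inv]
          rfl
        have hdirac : (μ : Measure ℝ).real {a} * (diracProba a : Measure ℝ).real A =
            (μ : Measure ℝ).real (A ∩ {a}) := by
          by_cases ha : a ∈ A <;> simp [measureReal_def, ha]
        rw [real_mix hc, hνA, mul_inv_cancel_left₀ hne, hdirac, inter_comm {a}ᶜ, ← sdiff_eq,
          measureReal_inter_add_sdiff (measurableSet_singleton a)]
      rw [hmix, hU _ hc, ih ν hνs, integral_mix hc _ _ (hint _) (hint _),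
        integral_diracProba fun t ↦ U (diracProba t)]

lemma exists_finset_approx (μ : ProbabilityMeasure ℝ) :
    ∃ ν : ℕ → ProbabilityMeasure ℝ, Tendsto ν atTop (𝓝 μ) ∧
      ∀ n, ∃ s : Finset ℝ, (ν n : Measure ℝ) (s : Set ℝ)ᶜ = 0 := by
  have hid : StronglyMeasurable (id : ℝ → ℝ) := stronglyMeasurable_id
  refine ⟨fun n ↦ μ.map (hid.approx n).measurable.aemeasurable, ?_, fun n ↦ ?_⟩
  · refine ProbabilityMeasure.tendsto_iff_forall_integral_tendsto.2 fun f ↦ ?_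
    simp only [ProbabilityMeasure.toMeasure_map]
    have hmap : ∀ n, ∫ t, f t ∂(μ : Measure ℝ).map (hid.approx n) =
        ∫ t, f (hid.approx n t) ∂(μ : Measure ℝ) := fun n ↦
      integral_map (hid.approx n).measurable.aemeasurable
        f.continuous.aestronglyMeasurable
    simp only [hmap]
    refine tendsto_integral_of_dominated_convergence (fun _ ↦ ‖f‖)
      (fun n ↦ (f.continuous.measurable.comp (hid.approx n).measurable).aestronglyMeasurable)
      (integrable_const _) (fun n ↦ .of_forall fun t ↦ f.norm_coe_le_norm _)
      (.of_forall fun t ↦ (f.continuous.tendsto _).comp (hid.tendsto_approx t))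
  · refine ⟨(hid.approx n).range, ?_⟩
    rw [ProbabilityMeasure.toMeasure_map, Measure.map_apply (hid.approx n).measurable
      (Finset.measurableSet _).compl]
    simp

lemma IsAffine.eq_integral {U : ProbabilityMeasure ℝ → ℝ} (hU : IsAffine U)
    (hc : Continuous U) (μ : ProbabilityMeasure ℝ) :
    U μ = ∫ t, U (diracProba t) ∂(μ : Measure ℝ) := by
  obtain ⟨C, hC⟩ := hU.bounded_dirac hc
  have hu : Continuous fun t : ℝ ↦ U (diracProba t) := hc.comp continuous_diracProba
  obtain ⟨ν, hν, hs⟩ := exists_finset_approx μ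
  refine tendsto_nhds_unique ((hc.tendsto μ).comp hν) ?_
  refine (ProbabilityMeasure.tendsto_iff_forall_integral_tendsto.1 hν
    (BoundedContinuousFunction.ofNormedAddCommGroup _ hu C hC)).congr fun n ↦ ?_
  obtain ⟨s, hs⟩ := hs n
  exact (hU.eq_integral_of_finset (integrable_of_bounded hu hC) s (ν n) hs).symm

/-- Two expected-utility representations of the same preference satisfy the cross-ratio identity
on triples of points ordered by utility. -/
lemma cross_identity {R : ProbabilityMeasure ℝ → ProbabilityMeasure ℝ → Prop} {u v : ℝ → ℝ}
    (hui : ∀ μ : ProbabilityMeasure ℝ, Integrable u (μ : Measure ℝ))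
    (hvi : ∀ μ : ProbabilityMeasure ℝ, Integrable v (μ : Measure ℝ))
    (hu : ∀ μ ν : ProbabilityMeasure ℝ,
      R μ ν ↔ ∫ t, u t ∂(ν : Measure ℝ) ≤ ∫ t, u t ∂(μ : Measure ℝ))
    (hv : ∀ μ ν : ProbabilityMeasure ℝ,
      R μ ν ↔ ∫ t, v t ∂(ν : Measure ℝ) ≤ ∫ t, v t ∂(μ : Measure ℝ))
    {x y z : ℝ} (hxy : u x ≤ u y) (hyz : u y ≤ u z) :
    (u z - u x) * v y = (u y - u x) * v z + (u z - u y) * v x := by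
  have heq : ∀ μ ν : ProbabilityMeasure ℝ, ∫ t, u t ∂(μ : Measure ℝ) = ∫ t, u t ∂(ν : Measure ℝ) →
      ∫ t, v t ∂(μ : Measure ℝ) = ∫ t, v t ∂(ν : Measure ℝ) := fun μ ν h ↦
    le_antisymm ((hv _ _).1 ((hu _ _).2 h.le)) ((hv _ _).1 ((hu _ _).2 h.ge))
  rcases (hxy.trans hyz).eq_or_lt with hxz | hxz
  · have h₁ : u y = u x := by linarith
    rw [h₁, ← hxz]
    ring
  have hpos : 0 < u z - u x := sub_pos.2 hxz
  have hα : (u y - u x) / (u z - u x) ∈ Icc (0 : ℝ) 1 :=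
    ⟨div_nonneg (by linarith) hpos.le, div_le_one_of_le₀ (by linarith) hpos.le⟩
  have h := heq (diracProba y)
    (mix ((u y - u x) / (u z - u x)) (diracProba z) (diracProba x)) (by
      rw [integral_mix hα _ _ (hui _) (hui _)]
      simp only [integral_diracProba]
      field_simp
      ring)
  rw [integral_mix hα _ _ (hvi _) (hvi _)] at h
  simp only [integral_diracProba] at h
  rw [h]
  field_simp
  ring

lemma eq_affine_of_represents {R : ProbabilityMeasure ℝ → ProbabilityMeasure ℝ → Prop}
    {u v : ℝ → ℝ}
    (hui : ∀ μ : ProbabilityMeasure ℝ, Integrable u (μ : Measure ℝ))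
    (hvi : ∀ μ : ProbabilityMeasure ℝ, Integrable v (μ : Measure ℝ))
    (hu : ∀ μ ν : ProbabilityMeasure ℝ,
      R μ ν ↔ ∫ t, u t ∂(ν : Measure ℝ) ≤ ∫ t, u t ∂(μ : Measure ℝ))
    (hv : ∀ μ ν : ProbabilityMeasure ℝ,
      R μ ν ↔ ∫ t, v t ∂(ν : Measure ℝ) ≤ ∫ t, v t ∂(μ : Measure ℝ)) :
    ∃ a : ℝ, 0 < a ∧ ∃ b : ℝ, ∀ t : ℝ, v t = a * u t + b := by
  have hle : ∀ s t, u s ≤ u t ↔ v s ≤ v t := fun s t ↦ by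
    simpa only [integral_diracProba] using (hu (diracProba t) (diracProba s)).symm.trans (hv _ _)
  by_cases hconst : ∃ q p, u q < u p
  · obtain ⟨q, p, hqp⟩ := hconst
    have hpos : 0 < u p - u q := sub_pos.2 hqp
    have hvpos : 0 < v p - v q := sub_pos.2 (lt_of_not_ge fun hv' ↦ hqp.not_ge ((hle _ _).2 hv'))
    refine ⟨(v p - v q) / (u p - u q), div_pos hvpos hpos,
      v q - (v p - v q) / (u p - u q) * u q, fun t ↦ ?_⟩
    have key : (u p - u q) * v t = (v p - v q) * u t + (u p - u q) * v q - (v p - v q) * u q := by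
      rcases le_total (u t) (u q) with h₁ | h₁
      · linarith [cross_identity hui hvi hu hv h₁ hqp.le]
      rcases le_total (u t) (u p) with h₂ | h₂
      · linarith [cross_identity hui hvi hu hv h₁ h₂]
      · linarith [cross_identity hui hvi hu hv hqp.le h₂]
    field_simp
    linarith
  · push Not at hconst
    refine ⟨1, one_pos, v 0 - u 0, fun t ↦ ?_⟩
    have h₁ : u t = u 0 := le_antisymm (hconst _ _) (hconst _ _)
    have h₂ : v t = v 0 := le_antisymm ((hle _ _).1 h₁.le) ((hle _ _).1 h₁.ge)
    rw [h₁, h₂]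
    ring

end VonNeumannMorgenstern

/-- von Neumann–Morgenstern representation theorem on the space of Borel
probability measures on ℝ with the weak topology: a weakly continuous total
preorder satisfying independence and the Archimedean axiom is represented by the
expectation of a bounded continuous utility index, unique up to positive affine
transformations. -/
theorem vonNeumann_morgenstern_probability_measures
    (R : ProbabilityMeasure ℝ → ProbabilityMeasure ℝ → Prop)
    (hrefl : ∀ μ, R μ μ)
    (htrans : ∀ μ ν η, R μ ν → R ν η → R μ η)
    (htotal : ∀ μ ν, R μ ν ∨ R ν μ)
    (hind : ∀ μ ν η : ProbabilityMeasure ℝ, ∀ α : ℝ, 0 < α → α ≤ 1 →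
      SPref R μ ν →
      ∀ κ κ' : ProbabilityMeasure ℝ,
        (κ : Measure ℝ) = mixMeasure α μ η → (κ' : Measure ℝ) = mixMeasure α ν η →
        SPref R κ κ')
    (harch : ∀ μ ν η : ProbabilityMeasure ℝ, SPref R μ ν → SPref R ν η →
      ∃ α ∈ Set.Ioo (0:ℝ) 1, ∃ β ∈ Set.Ioo (0:ℝ) 1,
        ∃ κ κ' : ProbabilityMeasure ℝ,
          (κ : Measure ℝ) = mixMeasure α μ η ∧
          (κ' : Measure ℝ) = mixMeasure β μ η ∧
          SPref R κ ν ∧ SPref R ν κ')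
    (hcont : ∀ μ : ProbabilityMeasure ℝ,
      IsClosed {ν | R ν μ} ∧ IsClosed {ν | R μ ν}) :
    ∃ u : ℝ → ℝ, Continuous u ∧ (∃ C : ℝ, ∀ t : ℝ, |u t| ≤ C) ∧
      (∀ μ ν : ProbabilityMeasure ℝ,
        R μ ν ↔ ∫ t, u t ∂(ν : Measure ℝ) ≤ ∫ t, u t ∂(μ : Measure ℝ)) ∧
      (∀ v : ℝ → ℝ, Continuous v → (∃ C : ℝ, ∀ t : ℝ, |v t| ≤ C) →
        (∀ μ ν : ProbabilityMeasure ℝ,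
          R μ ν ↔ ∫ t, v t ∂(ν : Measure ℝ) ≤ ∫ t, v t ∂(μ : Measure ℝ)) →
        ∃ a : ℝ, 0 < a ∧ ∃ b : ℝ, ∀ t : ℝ, v t = a * u t + b) := by
  have h : VonNeumannMorgenstern.IsContinuousIndependent R :=
    { trans := fun {μ ν η} ↦ htrans μ ν η
      total := htotal
      strict_mix := fun {μ ν} η {α} h₀ h₁ hμν ↦ hind μ ν η α h₀ h₁ hμν _ _
        (VonNeumannMorgenstern.toMeasure_mix ⟨h₀.le, h₁⟩ μ η)
        (VonNeumannMorgenstern.toMeasure_mix ⟨h₀.le, h₁⟩ ν η)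
      isClosed_ge := fun μ ↦ (hcont μ).1
      isClosed_le := fun μ ↦ (hcont μ).2 }
  obtain ⟨U, hR, hU⟩ := h.exists_affine_representation
  have hc : Continuous U := hU.continuous (fun μ ↦ by simpa only [hR] using (hcont μ).1)
    (fun μ ↦ by simpa only [hR] using (hcont μ).2)
  have hu : Continuous fun t : ℝ ↦ U (diracProba t) := hc.comp continuous_diracProba
  obtain ⟨C, hC⟩ := hU.bounded_dirac hc
  have hrep : ∀ μ ν : ProbabilityMeasure ℝ,
      R μ ν ↔ ∫ t, U (diracProba t) ∂(ν : Measure ℝ) ≤ ∫ t, U (diracProba t) ∂(μ : Measure ℝ) :=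
    fun μ ν ↦ by rw [hR, hU.eq_integral hc μ, hU.eq_integral hc ν]
  refine ⟨fun t ↦ U (diracProba t), hu, ⟨C, hC⟩, hrep, ?_⟩
  rintro v hv ⟨D, hD⟩ hvrep
  exact VonNeumannMorgenstern.eq_affine_of_represents
    (VonNeumannMorgenstern.integrable_of_bounded hu hC)
    (VonNeumannMorgenstern.integrable_of_bounded hv hD) hrep hvrep
end

section
/- Let (Ω, ℱ, P) be a probability space and 𝒜 ⊆ ℱ a sub-σ-algebra. Let x, y : Ω → ℝ be ℱ-measurable functions with exp(x) and exp(y) integrable, and let A ∈ 𝒜. Then, P-almost everywhere, log E[exp(1_A·x + 1_{A^c}·y) | 𝒜] = 1_A · log E[exp(x) | 𝒜] + 1_{A^c} · log E[exp(y) | 𝒜]. (This is the locality property of the conditional entropic utility U(x) = log E[e^x | 𝒜] proved in the paper, showing that it represents a conditional preference.) -/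
open MeasureTheory Classical

noncomputable section

/-- Conditional expectation commutes with pasting along a set of the conditioning σ-algebra. -/
theorem condExp_piecewise_ae_eq {Ω E : Type*} [NormedAddCommGroup E] [NormedSpace ℝ E]
    [CompleteSpace E] {m m0 : MeasurableSpace Ω} {μ : Measure Ω} (hm : m ≤ m0) {f g : Ω → E}
    (hf : Integrable f μ) (hg : Integrable g μ) {A : Set Ω} (hA : MeasurableSet[m] A) :
    μ[A.piecewise f g | m] =ᵐ[μ] A.piecewise (μ[f | m]) (μ[g | m]) := by
  rw [← Set.indicator_add_compl_eq_piecewise, ← Set.indicator_add_compl_eq_piecewise]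
  exact (condExp_add (hf.indicator (hm _ hA)) (hg.indicator (hm _ hA).compl) m).trans
    ((condExp_indicator hf hA).add (condExp_indicator hg hA.compl))

/-- Locality of the conditional entropic utility `U(x) = log E[exp x | 𝒜]`:
for `A ∈ 𝒜`, almost everywhere
`log E[exp(1_A x + 1_{Aᶜ} y) | 𝒜] = 1_A log E[exp x | 𝒜] + 1_{Aᶜ} log E[exp y | 𝒜]`. -/
theorem entropic_utility_locality
    {Ω : Type*} {m0 : MeasurableSpace Ω} (μ : Measure Ω) [IsProbabilityMeasure μ]
    (m : MeasurableSpace Ω) (hm : m ≤ m0)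
    (x y : Ω → ℝ) (hx : Measurable x) (hy : Measurable y)
    (hix : Integrable (fun ω => Real.exp (x ω)) μ)
    (hiy : Integrable (fun ω => Real.exp (y ω)) μ)
    (A : Set Ω) (hA : MeasurableSet[m] A) :
    (fun ω => Real.log ((μ[fun ω' => Real.exp (Set.piecewise A x y ω')|m]) ω))
      =ᵐ[μ]
    Set.piecewise A
      (fun ω => Real.log ((μ[fun ω' => Real.exp (x ω')|m]) ω))
      (fun ω => Real.log ((μ[fun ω' => Real.exp (y ω')|m]) ω)) := by
  have h_exp : (fun ω => Real.exp (A.piecewise x y ω)) =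
      A.piecewise (fun ω => Real.exp (x ω)) (fun ω => Real.exp (y ω)) := by
    ext ω
    exact A.apply_piecewise x y fun _ => Real.exp
  rw [h_exp]
  filter_upwards [condExp_piecewise_ae_eq hm hix hiy hA] with ω hω
  rw [hω]
  exact A.apply_piecewise _ _ fun _ => Real.log

end
end
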